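/- arXiv:1908.04049 — 2 statements merged into one kernel-verified Lean document; each statement's English description precedes it below -/
import Mathlib

section
/- Let β be a positive integer and c > 0 a real number. Then there exists a constant C > 0, depending only on β and c, such that for all x ∈ [−1,1] and all α, n ∈ ℕ₀ with α ≥ c(1+n), ((1−x)/2)^{α/2+1/4} ((1+x)/2)^{β/2+1/4} |P_n^{(α,β)}(x)| ≤ C (n+1)^{−1/3} ( (n+1)/(α+1) )^{β/2+1/4}. -/
/-- Generalized binomial coefficient `C(t, j) = t(t-1)⋯(t-j+1)/j!`. -/
noncomputable def genChoose (t : ℝ) (j : ℕ) : ℝ :=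
  (∏ i ∈ Finset.range j, (t - (i : ℝ))) / (Nat.factorial j : ℝ)

/-- Jacobi polynomial
`P_n^{(α,β)}(x) = ∑_{s=0}^n C(n+α, n-s) C(n+β, s) ((x-1)/2)^s ((x+1)/2)^{n-s}`. -/
noncomputable def jacobi (α β : ℝ) (n : ℕ) (x : ℝ) : ℝ :=
  ∑ s ∈ Finset.range (n + 1),
    genChoose ((n : ℝ) + α) (n - s) * genChoose ((n : ℝ) + β) s *
      ((x - 1) / 2) ^ s * ((x + 1) / 2) ^ (n - s)

section

open Real Set
open scoped Nat

lemma le_of_hasDerivAt_nonpos {f f' : ℝ → ℝ} {p q : ℝ} (hpq : p ≤ q)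
    (hf : ∀ x ∈ Icc p q, HasDerivAt f (f' x) x) (hf' : ∀ x ∈ Icc p q, f' x ≤ 0) :
    f q ≤ f p := by
  have h : AntitoneOn f (Icc p q) :=
    antitoneOn_of_hasDerivWithinAt_nonpos (convex_Icc p q)
      (fun x hx => (hf x hx).continuousAt.continuousWithinAt)
      (fun x hx => (hf x (interior_subset hx)).hasDerivWithinAt)
      (fun x hx => hf' x (interior_subset hx))
  exact h (left_mem_Icc.2 hpq) (right_mem_Icc.2 hpq) hpq

/-- The Sonin function of an oscillator with potential `Q` decreases where `Q` is positive
and increasing. -/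
lemma sonin_le {u v Q Q₁ : ℝ → ℝ} {p q : ℝ} (hpq : p ≤ q)
    (hu : ∀ x ∈ Icc p q, HasDerivAt u (v x) x)
    (hv : ∀ x ∈ Icc p q, HasDerivAt v (-Q x * u x) x)
    (hQ : ∀ x ∈ Icc p q, HasDerivAt Q (Q₁ x) x)
    (hpos : ∀ x ∈ Icc p q, 0 < Q x) (hQ₁ : ∀ x ∈ Icc p q, 0 ≤ Q₁ x) :
    u q ^ 2 + v q ^ 2 / Q q ≤ u p ^ 2 + v p ^ 2 / Q p := by
  refine le_of_hasDerivAt_nonpos (f := fun x => u x ^ 2 + v x ^ 2 / Q x)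
    (f' := fun x => -(Q₁ x * v x ^ 2 / Q x ^ 2)) hpq (fun x hx => ?_) (fun x hx => ?_)
  · have h0 := (hpos x hx).ne'
    refine (((hu x hx).pow 2).add (((hv x hx).pow 2).div (hQ x hx) h0)).congr_deriv ?_
    simp only [Pi.pow_apply]
    field_simp
    ring
  · have := hQ₁ x hx
    simp only [neg_nonpos]
    positivity

/-- The energy of an oscillator with potential `Q` decreases where `Q` is decreasing. -/
lemma energy_le {u v Q Q₁ : ℝ → ℝ} {p q : ℝ} (hpq : p ≤ q)
    (hu : ∀ x ∈ Icc p q, HasDerivAt u (v x) x)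
    (hv : ∀ x ∈ Icc p q, HasDerivAt v (-Q x * u x) x)
    (hQ : ∀ x ∈ Icc p q, HasDerivAt Q (Q₁ x) x) (hQ₁ : ∀ x ∈ Icc p q, Q₁ x ≤ 0) :
    v q ^ 2 + Q q * u q ^ 2 ≤ v p ^ 2 + Q p * u p ^ 2 := by
  refine le_of_hasDerivAt_nonpos (f := fun x => v x ^ 2 + Q x * u x ^ 2)
    (f' := fun x => Q₁ x * u x ^ 2) hpq (fun x hx => ?_) (fun x hx => ?_)
  · refine (((hv x hx).pow 2).add ((hQ x hx).mul ((hu x hx).pow 2))).congr_deriv ?_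
    simp only [Pi.pow_apply]
    ring
  · exact mul_nonpos_of_nonpos_of_nonneg (hQ₁ x hx) (sq_nonneg _)

/-- With `r = √(Q + η)`, the modified adiabatic invariant
of the oscillator with potential `Q`, for the multiplier `1 / r`. -/
noncomputable def adiabatic (r u v Q Q₁ Q₂ : ℝ) : ℝ :=
  v ^ 2 / r + Q₁ * u * v / (2 * r ^ 3) +
    (Q / r - Q₂ / (4 * r ^ 3) + 3 * Q₁ ^ 2 / (8 * r ^ 5)) * u ^ 2

lemma adiabatic_le_of_le {u v Q Q₁ Q₂ Q₃ : ℝ → ℝ} {p q η : ℝ} (hpq : p ≤ q) (hη : 0 < η)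
    (hu : ∀ x ∈ Icc p q, HasDerivAt u (v x) x)
    (hv : ∀ x ∈ Icc p q, HasDerivAt v (-Q x * u x) x)
    (hQ : ∀ x ∈ Icc p q, HasDerivAt Q (Q₁ x) x)
    (hQ₁ : ∀ x ∈ Icc p q, HasDerivAt Q₁ (Q₂ x) x)
    (hQ₂ : ∀ x ∈ Icc p q, HasDerivAt Q₂ (Q₃ x) x)
    (h0 : ∀ x ∈ Icc p q, 0 ≤ Q x) (h1 : ∀ x ∈ Icc p q, Q₁ x ≤ 0)
    (h1' : ∀ x ∈ Icc p q, Q₁ x ^ 2 ≤ η ^ 3 / 3)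
    (h2' : ∀ x ∈ Icc p q, -Q₂ x ≤ η ^ 2 / 4)
    (h3 : ∀ x ∈ Icc p q, -Q₃ x ≤ η * -Q₁ x) :
    adiabatic √(Q q + η) (u q) (v q) (Q q) (Q₁ q) (Q₂ q) ≤
      adiabatic √(Q p + η) (u p) (v p) (Q p) (Q₁ p) (Q₂ p) := by
  refine le_of_hasDerivAt_nonpos
    (f := fun x => adiabatic √(Q x + η) (u x) (v x) (Q x) (Q₁ x) (Q₂ x))
    (f' := fun x => (η * Q₁ x / √(Q x + η) ^ 3 - Q₃ x / (4 * √(Q x + η) ^ 3)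
      + 9 * Q₁ x * Q₂ x / (8 * √(Q x + η) ^ 5)
      - 15 * Q₁ x ^ 3 / (16 * √(Q x + η) ^ 7)) * u x ^ 2) hpq (fun x hx => ?_) (fun x hx => ?_)
  · have hpos : 0 < Q x + η := add_pos_of_nonneg_of_pos (h0 x hx) hη
    have hr : HasDerivAt (fun x => √(Q x + η)) (Q₁ x / (2 * √(Q x + η))) x :=
      ((hQ x hx).add_const η).sqrt hpos.ne'
    have hr0 : √(Q x + η) ≠ 0 := (Real.sqrt_pos.2 hpos).ne'
    have hsq : √(Q x + η) ^ 2 = Q x + η := Real.sq_sqrt hpos.le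
    have hu := hu x hx
    have hv := hv x hx
    have hQ := hQ x hx
    have hQ₁ := hQ₁ x hx
    have hQ₂ := hQ₂ x hx
    have hη' : η = √(Q x + η) ^ 2 - Q x := by rw [hsq]; ring
    have hd := (((hv.pow 2).div hr hr0).add (((hQ₁.mul hu).mul hv).div ((hr.pow 3).const_mul 2)
      (mul_ne_zero two_ne_zero (pow_ne_zero 3 hr0)))).add ((((hQ.div hr hr0).sub
      (hQ₂.div ((hr.pow 3).const_mul 4)
      (mul_ne_zero four_ne_zero (pow_ne_zero 3 hr0)))).add
      (((hQ₁.pow 2).const_mul 3).div ((hr.pow 5).const_mul 8)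
      (mul_ne_zero (by norm_num) (pow_ne_zero 5 hr0)))).mul (hu.pow 2))
    refine hd.congr_deriv ?_
    simp only [Pi.pow_apply, Pi.mul_apply, Pi.add_apply, Pi.sub_apply, Pi.div_apply]
    generalize √(Q x + η) = r at *
    rw [hη']
    field_simp
    ring
  · have hpos : 0 < Q x + η := add_pos_of_nonneg_of_pos (h0 x hx) hη
    have hr0 : 0 < √(Q x + η) := Real.sqrt_pos.2 hpos
    have hsq : η ≤ √(Q x + η) ^ 2 := by rw [Real.sq_sqrt hpos.le]; linarith [h0 x hx]
    have a1 := h1' x hx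
    have a2 := h2' x hx
    have a3 := h3 x hx
    have a4 := h1 x hx
    generalize √(Q x + η) = r at *
    refine mul_nonpos_of_nonpos_of_nonneg ?_ (sq_nonneg _)
    generalize Q₁ x = d at *
    generalize Q₂ x = e at *
    generalize Q₃ x = g at *
    have e1 : η * d / r ^ 3 - g / (4 * r ^ 3) + 9 * d * e / (8 * r ^ 5) - 15 * d ^ 3 / (16 * r ^ 7)
        = (η * d - g / 4 + 9 / 8 * (d * (e / r ^ 2)) - 15 / 16 * (d * (d ^ 2 / (r ^ 2) ^ 2)))
          / r ^ 3 := by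
      field_simp
    rw [e1]
    refine div_nonpos_of_nonpos_of_nonneg ?_ (by positivity)
    have b1 : -(e / r ^ 2) ≤ η / 4 := by
      rw [← neg_div, div_le_iff₀ (by positivity)]
      nlinarith
    have b2 : d ^ 2 / (r ^ 2) ^ 2 ≤ η / 3 := by
      rw [div_le_iff₀ (by positivity)]
      have : η ^ 2 ≤ (r ^ 2) ^ 2 := by gcongr
      nlinarith
    nlinarith

lemma mul_sq_le_adiabatic {r u v Q Q₁ Q₂ : ℝ} (hr : 0 < r) (h2 : Q₂ ≤ 0) :
    (Q / r + 5 / 16 * (Q₁ ^ 2 / r ^ 5)) * u ^ 2 ≤ adiabatic r u v Q Q₁ Q₂ := by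
  have h : adiabatic r u v Q Q₁ Q₂ - (Q / r + 5 / 16 * (Q₁ ^ 2 / r ^ 5)) * u ^ 2
      = (v + Q₁ * u / (4 * r ^ 2)) ^ 2 / r + -Q₂ * u ^ 2 / (4 * r ^ 3) := by
    unfold adiabatic
    field_simp
    ring
  have h2' : 0 ≤ -Q₂ := by linarith
  have : 0 ≤ (v + Q₁ * u / (4 * r ^ 2)) ^ 2 / r + -Q₂ * u ^ 2 / (4 * r ^ 3) := by positivity
  linarith

lemma adiabatic_le {r u v Q Q₁ Q₂ η : ℝ} (hη : 0 < η) (hQ : 0 ≤ Q) (hr : 0 < r)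
    (hr2 : r ^ 2 = Q + η) (h1 : Q₁ ^ 2 ≤ η ^ 3 / 3) (h2 : -Q₂ ≤ η ^ 2 / 4) :
    adiabatic r u v Q Q₁ Q₂ ≤ 2 * (v ^ 2 + (Q + η) * u ^ 2) / r := by
  have e : adiabatic r u v Q Q₁ Q₂ = (v ^ 2 + Q₁ / (2 * r ^ 2) * u * v +
      (Q + -Q₂ / (4 * r ^ 2) + 3 / 8 * (Q₁ ^ 2 / (r ^ 2) ^ 2)) * u ^ 2) / r := by
    unfold adiabatic
    field_simp
    ring
  rw [e]
  gcongr
  have hη' : η ≤ r ^ 2 := by linarith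
  have b1 : -Q₂ / (4 * r ^ 2) ≤ η / 16 := by
    rw [div_le_iff₀ (by positivity)]
    nlinarith
  have b2 : Q₁ ^ 2 / (r ^ 2) ^ 2 ≤ η / 3 := by
    rw [div_le_iff₀ (by positivity)]
    have : η ^ 2 ≤ (r ^ 2) ^ 2 := by gcongr
    nlinarith
  have b3 : Q₁ / (2 * r ^ 2) * u * v ≤ v ^ 2 + Q₁ ^ 2 / (r ^ 2) ^ 2 / 16 * u ^ 2 := by
    have : Q₁ ^ 2 / (r ^ 2) ^ 2 / 16 * u ^ 2 = (Q₁ / (4 * r ^ 2) * u) ^ 2 := by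
      field_simp; ring
    rw [this]
    have : Q₁ / (2 * r ^ 2) * u * v = 2 * (Q₁ / (4 * r ^ 2) * u) * v := by field_simp; ring
    rw [this]
    nlinarith [sq_nonneg (v - Q₁ / (4 * r ^ 2) * u)]
  nlinarith [mul_le_mul_of_nonneg_right b1 (sq_nonneg u),
    mul_le_mul_of_nonneg_right b2 (sq_nonneg u),
    mul_nonneg hQ (sq_nonneg u), mul_nonneg hη.le (sq_nonneg u), sq_nonneg v]

/-- Where its potential is nonpositive, an oscillator that vanishes at the right end point is
largest at the left one. -/
lemma sq_le_sq_of_nonpos {u v Q : ℝ → ℝ} {p q x : ℝ} (hx : x ∈ Icc p q)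
    (hc : ContinuousOn u (Icc p q))
    (hu : ∀ x ∈ Ioo p q, HasDerivAt u (v x) x)
    (hv : ∀ x ∈ Ioo p q, HasDerivAt v (-Q x * u x) x)
    (hQ : ∀ x ∈ Ioo p q, Q x ≤ 0) (h0 : u q = 0) : u x ^ 2 ≤ u p ^ 2 := by
  have hpq : p ≤ q := hx.1.trans hx.2
  have hconv : ConvexOn ℝ (Icc p q) (fun x => u x ^ 2) := by
    refine convexOn_of_hasDerivWithinAt2_nonneg (f' := fun x => 2 * u x * v x)
      (f'' := fun x => 2 * v x ^ 2 + 2 * -Q x * u x ^ 2) (convex_Icc p q) (hc.pow 2) ?_ ?_ ?_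
    · intro y hy
      rw [interior_Icc] at hy
      refine HasDerivAt.hasDerivWithinAt ?_
      refine ((hu y hy).pow 2).congr_deriv ?_
      ring
    · intro y hy
      rw [interior_Icc] at hy
      refine HasDerivAt.hasDerivWithinAt ?_
      refine (((hu y hy).const_mul 2).mul (hv y hy)).congr_deriv ?_
      ring
    · intro y hy
      rw [interior_Icc] at hy
      have : 0 ≤ -Q y := by linarith [hQ y hy]
      positivity
  have := hconv.le_max_of_mem_Icc (left_mem_Icc.2 hpq) (right_mem_Icc.2 hpq) hx
  simpa [h0, sq_nonneg] using this
/-- The coefficients of the Jacobi polynomial in the basis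
`((1 - x) / 2) ^ s * ((1 + x) / 2) ^ (n - s)`. -/
noncomputable def jacobiCoeff (α β : ℝ) (n s : ℕ) : ℝ :=
  (-1) ^ s * (genChoose (n + α) (n - s) * genChoose (n + β) s)

lemma genChoose_succ (t : ℝ) (j : ℕ) :
    genChoose t (j + 1) * (j + 1) = genChoose t j * (t - j) := by
  have : (j ! : ℝ) ≠ 0 := by positivity
  have : (j : ℝ) + 1 ≠ 0 := by positivity
  simp only [genChoose, Finset.prod_range_succ, Nat.factorial_succ, Nat.cast_mul, Nat.cast_add,
    Nat.cast_one]
  field_simp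

lemma genChoose_natCast (N j : ℕ) : genChoose N j = N.choose j := by
  induction j with
  | zero => simp [genChoose]
  | succ j ih =>
    have h := genChoose_succ N j
    have h' : ((N.choose (j + 1) : ℕ) : ℝ) * (j + 1) = N.choose j * (N - j) := by
      rcases le_or_gt j N with hj | hj
      · have := Nat.choose_succ_right_eq N j
        rw [← Nat.cast_sub hj]
        exact_mod_cast this
      · simp [Nat.choose_eq_zero_of_lt hj, Nat.choose_eq_zero_of_lt (Nat.lt_succ_of_lt hj)]
    have h0 : (j : ℝ) + 1 ≠ 0 := by positivity
    rw [ih, ← h'] at h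
    exact mul_right_cancel₀ h0 h

lemma jacobiCoeff_succ (α β : ℝ) {n s : ℕ} (hs : s < n) :
    jacobiCoeff α β n (s + 1) * ((s + 1) * (α + (s + 1))) =
      -(jacobiCoeff α β n s * ((n - s) * (β + (n - s)))) := by
  obtain ⟨j, rfl⟩ : ∃ j, n = s + 1 + j := ⟨n - (s + 1), by omega⟩
  have e1 : s + 1 + j - (s + 1) = j := by omega
  have e2 : s + 1 + j - s = j + 1 := by omega
  have h1 := genChoose_succ (((s + 1 + j : ℕ) : ℝ) + α) j
  have h2 := genChoose_succ (((s + 1 + j : ℕ) : ℝ) + β) s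
  simp only [jacobiCoeff, e1, e2]
  push_cast at h1 h2 ⊢
  generalize genChoose ((s : ℝ) + 1 + j + α) j = x1 at *
  generalize genChoose ((s : ℝ) + 1 + j + α) (j + 1) = x2 at *
  generalize genChoose ((s : ℝ) + 1 + j + β) s = x3 at *
  generalize genChoose ((s : ℝ) + 1 + j + β) (s + 1) = x4 at *
  have h1' : x1 * (α + (s + 1)) = x2 * (j + 1) := by rw [h1]; ring
  have h2' : x4 * (s + 1) = x3 * (β + (j + 1)) := by rw [h2]; ring
  calc (-1) ^ (s + 1) * (x1 * x4) * ((s + 1) * (α + (s + 1)))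
      = (-1) ^ (s + 1) * ((x1 * (α + (s + 1))) * (x4 * (s + 1))) := by ring
    _ = _ := by rw [h1', h2']; ring

/-- The weight `cos ^ μ * sin ^ ν`. -/
noncomputable def trigPow (μ ν w : ℝ) : ℝ := cos w ^ μ * sin w ^ ν

lemma cos_pos_of_mem {w : ℝ} (hw : w ∈ Ioo 0 (π / 2)) : 0 < cos w :=
  cos_pos_of_mem_Ioo ⟨by linarith [hw.1, pi_pos], hw.2⟩

lemma sin_pos_of_mem {w : ℝ} (hw : w ∈ Ioo 0 (π / 2)) : 0 < sin w :=
  sin_pos_of_pos_of_lt_pi hw.1 (by linarith [hw.2, pi_pos])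

lemma tan_pos_of_mem {w : ℝ} (hw : w ∈ Ioo 0 (π / 2)) : 0 < tan w :=
  tan_pos_of_pos_of_lt_pi_div_two hw.1 hw.2

lemma hasDerivAt_tan' {w : ℝ} (hw : w ∈ Ioo 0 (π / 2)) : HasDerivAt tan (1 + tan w ^ 2) w := by
  have hc := (cos_pos_of_mem hw).ne'
  refine (Real.hasDerivAt_tan hc).congr_deriv ?_
  rw [Real.tan_eq_sin_div_cos]
  field_simp
  linarith [sin_sq_add_cos_sq w]

lemma hasDerivAt_trigPow (μ ν : ℝ) {w : ℝ} (hw : w ∈ Ioo 0 (π / 2)) :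
    HasDerivAt (trigPow μ ν) (trigPow μ ν w * (ν / tan w - μ * tan w)) w := by
  have hc := cos_pos_of_mem hw
  have hs := sin_pos_of_mem hw
  refine (((hasDerivAt_cos w).rpow_const (p := μ) (Or.inl hc.ne')).mul
    ((hasDerivAt_sin w).rpow_const (p := ν) (Or.inl hs.ne'))).congr_deriv ?_
  rw [trigPow, Real.tan_eq_sin_div_cos, rpow_sub_one hc.ne', rpow_sub_one hs.ne']
  field_simp
  ring

lemma hasDerivAt_trigPow' (μ ν : ℝ) {w : ℝ} (hw : w ∈ Ioo 0 (π / 2)) :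
    HasDerivAt (fun w => trigPow μ ν w * (ν / tan w - μ * tan w))
      (trigPow μ ν w * (μ * (μ - 1) * (1 + tan w ^ 2) + ν * (ν - 1) * (1 + 1 / tan w ^ 2)
        - (μ + ν) ^ 2)) w := by
  have ht := (tan_pos_of_mem hw).ne'
  have htd := hasDerivAt_tan' hw
  refine ((hasDerivAt_trigPow μ ν hw).mul
    (((hasDerivAt_const w ν).div htd ht).sub (htd.const_mul μ))).congr_deriv ?_
  simp only [Pi.div_apply, Pi.sub_apply]
  field_simp
  ring

lemma trigPow_add_two (μ ν : ℝ) {w : ℝ} (hw : w ∈ Ioo 0 (π / 2)) :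
    trigPow μ (ν + 2) w = trigPow (μ + 2) ν w * tan w ^ 2 := by
  have hc := cos_pos_of_mem hw
  have hs := sin_pos_of_mem hw
  rw [trigPow, trigPow, rpow_add hs, rpow_add hc, Real.tan_eq_sin_div_cos]
  norm_num
  field_simp

/-- The weighted Jacobi polynomial at `x = -cos (2 w)`. -/
noncomputable def jacobiWave (α β : ℝ) (n : ℕ) (w : ℝ) : ℝ :=
  ∑ s ∈ Finset.range (n + 1),
    jacobiCoeff α β n s * trigPow (α + 1 / 2 + 2 * s) (β + 1 / 2 + 2 * (n - s)) w

/-- The derivative of `jacobiWave`. -/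
noncomputable def jacobiWaveDeriv (α β : ℝ) (n : ℕ) (w : ℝ) : ℝ :=
  ∑ s ∈ Finset.range (n + 1), jacobiCoeff α β n s *
    (trigPow (α + 1 / 2 + 2 * s) (β + 1 / 2 + 2 * (n - s)) w *
      ((β + 1 / 2 + 2 * (n - s)) / tan w - (α + 1 / 2 + 2 * s) * tan w))

/-- The potential `k - A tan² - B / tan²`. -/
noncomputable def tanPot (k A B w : ℝ) : ℝ := k - A * tan w ^ 2 - B / tan w ^ 2

lemma hasDerivAt_jacobiWave (α β : ℝ) (n : ℕ) {w : ℝ} (hw : w ∈ Ioo 0 (π / 2)) :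
    HasDerivAt (jacobiWave α β n) (jacobiWaveDeriv α β n w) w :=
  HasDerivAt.fun_sum fun _ _ => (hasDerivAt_trigPow _ _ hw).const_mul _

lemma hasDerivAt_jacobiWaveDeriv (α β : ℝ) (n : ℕ) {w : ℝ} (hw : w ∈ Ioo 0 (π / 2)) :
    HasDerivAt (jacobiWaveDeriv α β n)
      (-tanPot ((2 * n + α + β + 1) ^ 2 - (α ^ 2 - 1 / 4) - (β ^ 2 - 1 / 4))
        (α ^ 2 - 1 / 4) (β ^ 2 - 1 / 4) w * jacobiWave α β n w) w := by
  have ht := tan_pos_of_mem hw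
  refine (HasDerivAt.fun_sum fun (s : ℕ) _ => (hasDerivAt_trigPow' (α + 1 / 2 + 2 * s)
    (β + 1 / 2 + 2 * (n - s)) hw).const_mul (jacobiCoeff α β n s)).congr_deriv ?_
  rw [jacobiWave, Finset.mul_sum, ← sub_eq_zero, ← Finset.sum_sub_distrib]
  set T : ℕ → ℝ := fun s => trigPow (α + 1 / 2 + 2 * s) (β + 1 / 2 + 2 * (n - s)) w with hT
  have hTs : ∀ s, T s = T (s + 1) * tan w ^ 2 := by
    intro s
    have := trigPow_add_two (α + 1 / 2 + 2 * s) (β + 1 / 2 + 2 * (n - (s + 1))) hw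
    simp only [hT]
    push_cast
    convert this using 2 <;> ring_nf
  have key : ∀ s : ℕ, jacobiCoeff α β n s * (T s * ((α + 1 / 2 + 2 * s) *
        (α + 1 / 2 + 2 * s - 1) * (1 + tan w ^ 2) + (β + 1 / 2 + 2 * (n - s)) *
        (β + 1 / 2 + 2 * (n - s) - 1) * (1 + 1 / tan w ^ 2)
        - (α + 1 / 2 + 2 * s + (β + 1 / 2 + 2 * (n - s))) ^ 2)) -
      -tanPot ((2 * n + α + β + 1) ^ 2 - (α ^ 2 - 1 / 4) - (β ^ 2 - 1 / 4))
        (α ^ 2 - 1 / 4) (β ^ 2 - 1 / 4) w * (jacobiCoeff α β n s * T s)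
      = 4 * (1 + tan w ^ 2) * (jacobiCoeff α β n s * (s * (α + s)) * T s +
        jacobiCoeff α β n s * ((n - s) * (β + (n - s))) * (T s / tan w ^ 2)) := by
    intro s
    unfold tanPot
    field_simp
    ring
  rw [Finset.sum_congr rfl fun s _ => key s, ← Finset.mul_sum, Finset.sum_add_distrib,
    Finset.sum_range_succ', Finset.sum_range_succ (fun s => jacobiCoeff α β n s *
      (((n : ℝ) - s) * (β + (n - s))) * (T s / tan w ^ 2))]
  simp only [Nat.cast_zero, zero_mul, mul_zero, add_zero, sub_self]
  rw [← Finset.sum_add_distrib, Finset.sum_eq_zero, mul_zero]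
  intro s hs
  have h := jacobiCoeff_succ α β (Finset.mem_range.1 hs)
  push_cast
  rw [h, hTs s]
  field_simp
  ring

lemma continuous_jacobiWave {α β : ℝ} (hα : 0 < α) (hβ : 0 < β) (n : ℕ) :
    Continuous (jacobiWave α β n) := by
  refine continuous_finsetSum _ fun s hs => continuous_const.mul ?_
  have hs' : (s : ℝ) ≤ n := by exact_mod_cast Nat.lt_succ_iff.1 (Finset.mem_range.1 hs)
  exact (continuous_cos.rpow_const fun _ => Or.inr (by positivity)).mul
    (continuous_sin.rpow_const fun _ => Or.inr (by linarith))

lemma jacobiWave_pi_div_two {α : ℝ} (hα : 0 < α) (β : ℝ) (n : ℕ) :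
    jacobiWave α β n (π / 2) = 0 := by
  refine Finset.sum_eq_zero fun s _ => ?_
  have : α + 1 / 2 + 2 * s ≠ 0 := by positivity
  rw [trigPow, cos_pi_div_two, zero_rpow this, zero_mul, mul_zero]

lemma jacobiWave_eq (α β : ℝ) (n : ℕ) {w : ℝ} (hw : w ∈ Ioo 0 (π / 2)) :
    jacobiWave α β n w = (cos w ^ 2) ^ (α / 2 + 1 / 4) * (sin w ^ 2) ^ (β / 2 + 1 / 4) *
      jacobi α β n (2 * sin w ^ 2 - 1) := by
  have hc := cos_pos_of_mem hw
  have hs := sin_pos_of_mem hw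
  rw [jacobiWave, jacobi, Finset.mul_sum]
  refine Finset.sum_congr rfl fun s hsn => ?_
  have hsn' : s ≤ n := Nat.lt_succ_iff.1 (Finset.mem_range.1 hsn)
  have e1 : (2 * sin w ^ 2 - 1 - 1) / 2 = -1 * cos w ^ 2 := by
    linarith [sin_sq_add_cos_sq w]
  have e2 : (2 * sin w ^ 2 - 1 + 1) / 2 = sin w ^ 2 := by ring
  have e3 : (cos w ^ 2) ^ (α / 2 + 1 / 4) = cos w ^ (α + 1 / 2) := by
    rw [← rpow_natCast (cos w) 2, ← rpow_mul hc.le]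
    congr 1; push_cast; ring
  have e4 : (sin w ^ 2) ^ (β / 2 + 1 / 4) = sin w ^ (β + 1 / 2) := by
    rw [← rpow_natCast (sin w) 2, ← rpow_mul hs.le]
    congr 1; push_cast; ring
  have e5 : cos w ^ (2 * (s : ℝ)) = (cos w ^ 2) ^ s := by
    rw [← pow_mul, ← rpow_natCast]; push_cast; rfl
  have e6 : sin w ^ (2 * ((n : ℝ) - s)) = (sin w ^ 2) ^ (n - s) := by
    rw [← pow_mul, ← rpow_natCast, Nat.cast_mul, Nat.cast_sub hsn']; push_cast; rfl
  rw [e1, e2, e3, e4, trigPow, rpow_add hc, rpow_add hs, e5, e6, jacobiCoeff, mul_pow]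
  ring

lemma abs_jacobiCoeff_le (α β n s : ℕ) (hs : s ≤ n) :
    |jacobiCoeff α β n s| ≤
      (n + β : ℝ) ^ β * (((n + α) * (n + β) : ℝ) ^ (n - s) / (n - s)!) := by
  have e1 : genChoose ((n : ℝ) + α) (n - s) = (n + α).choose (n - s) := by
    rw [← genChoose_natCast]; push_cast; rfl
  have e2 : genChoose ((n : ℝ) + β) s = (n + β).choose (n - s + β) := by
    rw [← Nat.choose_symm (by omega), show n + β - (n - s + β) = s by omega, ← genChoose_natCast]
    push_cast; rfl
  have h1 : (((n + α).choose (n - s) : ℕ) : ℝ) ≤ (n + α : ℝ) ^ (n - s) / (n - s)! := by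
    exact_mod_cast Nat.choose_le_pow_div (α := ℝ) (n - s) (n + α)
  have h2 : (((n + β).choose (n - s + β) : ℕ) : ℝ) ≤ (n + β : ℝ) ^ (n - s + β) := by
    exact_mod_cast Nat.choose_le_pow (n + β) (n - s + β)
  rw [jacobiCoeff, e1, e2, abs_mul, abs_pow, abs_neg, abs_one, one_pow, one_mul,
    abs_of_nonneg (by positivity)]
  calc _ ≤ (n + α : ℝ) ^ (n - s) / (n - s)! * (n + β : ℝ) ^ (n - s + β) := by gcongr
    _ = _ := by rw [mul_pow, pow_add]; ring

lemma abs_jacobiWave_le (α β n : ℕ) {w : ℝ} (hw : w ∈ Ioo 0 (π / 2)) :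
    |jacobiWave α β n w| ≤ tan w ^ (β + 1 / 2 : ℝ) *
      ((n + β : ℝ) ^ β * exp ((n + α) * (n + β) * tan w ^ 2)) := by
  have hc := cos_pos_of_mem hw
  have hs := sin_pos_of_mem hw
  have ht := tan_pos_of_mem hw
  have hst : sin w ≤ tan w := by
    rw [Real.tan_eq_sin_div_cos, le_div_iff₀ hc]
    nlinarith [cos_le_one w]
  have hterm : ∀ s ∈ Finset.range (n + 1),
      |jacobiCoeff α β n s * trigPow (α + 1 / 2 + 2 * s) (β + 1 / 2 + 2 * (n - s)) w| ≤
      tan w ^ (β + 1 / 2 : ℝ) * ((n + β : ℝ) ^ β *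
        (((n + α) * (n + β) * tan w ^ 2 : ℝ) ^ (n - s) / (n - s)!)) := by
    intro s hsn
    have hsn' : s ≤ n := Nat.lt_succ_iff.1 (Finset.mem_range.1 hsn)
    have h1 : trigPow (α + 1 / 2 + 2 * s) (β + 1 / 2 + 2 * (n - s)) w ≤
        tan w ^ (β + 1 / 2 : ℝ) * (tan w ^ 2) ^ (n - s) := by
      have hexp : (0 : ℝ) ≤ β + 1 / 2 + 2 * (n - s) := by
        have : (s : ℝ) ≤ n := by exact_mod_cast hsn'
        have : (0 : ℝ) ≤ β := by positivity
        linarith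
      calc trigPow (α + 1 / 2 + 2 * s) (β + 1 / 2 + 2 * (n - s)) w
          ≤ 1 * tan w ^ (β + 1 / 2 + 2 * (n - s) : ℝ) :=
            mul_le_mul (rpow_le_one hc.le (cos_le_one w) (by positivity))
              (rpow_le_rpow hs.le hst hexp) (by positivity) zero_le_one
        _ = _ := by
            rw [one_mul, rpow_add ht, ← Nat.cast_sub hsn', ← pow_mul,
              ← rpow_natCast (tan w) (2 * (n - s))]
            push_cast; rfl
    have h0 : 0 ≤ trigPow (α + 1 / 2 + 2 * s) (β + 1 / 2 + 2 * (n - s)) w := by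
      unfold trigPow; positivity
    rw [abs_mul, abs_of_nonneg h0]
    calc _ ≤ (n + β : ℝ) ^ β * (((n + α) * (n + β) : ℝ) ^ (n - s) / (n - s)!) *
          (tan w ^ (β + 1 / 2 : ℝ) * (tan w ^ 2) ^ (n - s)) :=
          mul_le_mul (abs_jacobiCoeff_le α β n s hsn') h1 h0 (by positivity)
      _ = _ := by rw [mul_pow _ (tan w ^ 2)]; ring
  refine (Finset.abs_sum_le_sum_abs _ _).trans ((Finset.sum_le_sum hterm).trans ?_)
  rw [← Finset.mul_sum, ← Finset.mul_sum]
  gcongr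
  have := Finset.sum_range_reflect
    (fun k => ((n + α) * (n + β) * tan w ^ 2 : ℝ) ^ k / k !) (n + 1)
  simp only [add_tsub_cancel_right] at this
  rw [this]
  exact sum_le_exp_of_nonneg (by positivity) _
/-- The derivative of `tanPot`. -/
noncomputable def tanPot₁ (A B w : ℝ) : ℝ :=
  (1 + tan w ^ 2) * (-(2 * A * tan w) + 2 * B / tan w ^ 3)

/-- The second derivative of `tanPot`. -/
noncomputable def tanPot₂ (A B w : ℝ) : ℝ :=
  -(A * (2 + 8 * tan w ^ 2 + 6 * tan w ^ 4) + B * (2 + 8 / tan w ^ 2 + 6 / tan w ^ 4))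

/-- The third derivative of `tanPot`. -/
noncomputable def tanPot₃ (A B w : ℝ) : ℝ :=
  (1 + tan w ^ 2) * (-(A * (16 * tan w + 24 * tan w ^ 3)) +
    B * (16 / tan w ^ 3 + 24 / tan w ^ 5))

lemma hasDerivAt_tanPot (k A B : ℝ) {w : ℝ} (hw : w ∈ Ioo 0 (π / 2)) :
    HasDerivAt (tanPot k A B) (tanPot₁ A B w) w := by
  have ht := (tan_pos_of_mem hw).ne'
  have htd := hasDerivAt_tan' hw
  refine ((((htd.pow 2).const_mul A).const_sub k).sub
    ((hasDerivAt_const w B).div (htd.pow 2) (pow_ne_zero 2 ht))).congr_deriv ?_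
  simp only [tanPot₁, Pi.pow_apply]
  field_simp
  ring

lemma hasDerivAt_tanPot₁ (A B : ℝ) {w : ℝ} (hw : w ∈ Ioo 0 (π / 2)) :
    HasDerivAt (tanPot₁ A B) (tanPot₂ A B w) w := by
  have ht := (tan_pos_of_mem hw).ne'
  have htd := hasDerivAt_tan' hw
  refine (((htd.pow 2).const_add 1).mul ((htd.const_mul (2 * A)).neg.add
    ((hasDerivAt_const w (2 * B)).div (htd.pow 3) (pow_ne_zero 3 ht)))).congr_deriv ?_
  simp only [tanPot₂, Pi.pow_apply, Pi.add_apply, Pi.neg_apply, Pi.div_apply]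
  field_simp
  ring

lemma hasDerivAt_tanPot₂ (A B : ℝ) {w : ℝ} (hw : w ∈ Ioo 0 (π / 2)) :
    HasDerivAt (tanPot₂ A B) (tanPot₃ A B w) w := by
  have ht := (tan_pos_of_mem hw).ne'
  have htd := hasDerivAt_tan' hw
  refine ((((((htd.pow 2).const_mul 8).const_add 2).add ((htd.pow 4).const_mul 6)).const_mul A).add
    (((((hasDerivAt_const w 8).div (htd.pow 2) (pow_ne_zero 2 ht)).const_add 2).add
    ((hasDerivAt_const w 6).div (htd.pow 4) (pow_ne_zero 4 ht))).const_mul B)).neg.congr_deriv ?_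
  simp only [tanPot₃, Pi.pow_apply]
  field_simp
  ring

/-- The size conditions on the parameters of the potential `k - a² tan² - b² / tan²`. -/
structure PotBounds (α β m p C a b k : ℝ) : Prop where
  one_le_α : 1 ≤ α
  one_le_β : 1 ≤ β
  one_le_m : 1 ≤ m
  m_le : m ≤ p * α
  one_le_C : 1 ≤ C
  a_le : a ≤ α
  le_a : α / 2 ≤ a
  le_a_sq : 3 / 4 * α ^ 2 ≤ a ^ 2
  b_le : b ≤ β
  le_b : 1 / 2 ≤ b
  le_k : 2 * (m * α) ≤ k - 2 * a * b
  k_le : k ≤ C * (m * α)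

namespace PotBounds

variable {α β m p C a b k : ℝ}

lemma a_pos (H : PotBounds α β m p C a b k) : 0 < a := by linarith [H.le_a, H.one_le_α]

lemma b_pos (H : PotBounds α β m p C a b k) : 0 < b := by linarith [H.le_b]

lemma mα_pos (H : PotBounds α β m p C a b k) : 0 < m * α :=
  mul_pos (by linarith [H.one_le_m]) (by linarith [H.one_le_α])

lemma p_nonneg (H : PotBounds α β m p C a b k) : 0 ≤ p := by
  by_contra! hp
  nlinarith [H.m_le, H.one_le_m, H.one_le_α]

lemma tanPot_eq (a b k : ℝ) {w : ℝ} (ht : tan w ≠ 0) :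
    tanPot k (a ^ 2) (b ^ 2) w = k - 2 * a * b - (a * tan w - b / tan w) ^ 2 := by
  unfold tanPot
  field_simp
  ring

lemma tanPot_le (H : PotBounds α β m p C a b k) {w : ℝ} (ht : tan w ≠ 0) :
    tanPot k (a ^ 2) (b ^ 2) w ≤ C * (m * α) := by
  rw [tanPot_eq a b k ht]
  nlinarith [H.k_le, sq_nonneg (a * tan w - b / tan w), mul_pos H.a_pos H.b_pos]

/-- The potential is large near its maximum, which is where `tan² = b / a`. -/
lemma le_tanPot (H : PotBounds α β m p C a b k) {w σ s ρ : ℝ} (hσ : 0 < σ) (hσ2 : a * σ ^ 2 = b)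
    (hs : 0 < s) (hsm : s ^ 2 = m) (hρ : 0 < ρ) (hw : tan w = σ * ρ)
    (h1 : ρ ≤ 1 + s / (2 * β)) (h2 : 1 / ρ ≤ 1 + s / (2 * β)) :
    m * α ≤ tanPot k (a ^ 2) (b ^ 2) w := by
  have hβ : 0 < β := by linarith [H.one_le_β]
  have ha := H.a_pos
  have hb := H.b_pos
  rw [tanPot_eq a b k (by rw [hw]; positivity), hw]
  set z := s / (2 * β) with hz
  have hz0 : 0 < z := by positivity
  have e : (a * (σ * ρ) - b / (σ * ρ)) ^ 2 = a * b * (ρ - 1 / ρ) ^ 2 := by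
    rw [← hσ2]
    field_simp
  have h3 : 1 / (1 + z) ≤ ρ := by
    rw [div_le_iff₀ (by positivity)]
    rw [div_le_iff₀ hρ] at h2
    linarith
  have h4 : 1 / (1 + z) ≤ 1 / ρ := one_div_le_one_div_of_le hρ h1
  have h5 : 1 - z ≤ 1 / (1 + z) := by
    rw [le_div_iff₀ (by positivity)]
    nlinarith
  have h6 : (ρ - 1 / ρ) ^ 2 ≤ (2 * z) ^ 2 := by
    apply sq_le_sq'
    · linarith
    · linarith
  have h7 : a * b * (2 * z) ^ 2 ≤ m * α := by
    have e1 : a * b * (2 * z) ^ 2 = a * (b / β) * (m / β) := by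
      rw [hz, ← hsm]
      field_simp
    have e2 : b / β ≤ 1 := (div_le_one hβ).2 H.b_le
    have e3 : m / β ≤ m := div_le_self (by linarith [H.one_le_m]) H.one_le_β
    have : 0 ≤ m := by linarith [H.one_le_m]
    rw [e1]
    calc a * (b / β) * (m / β) ≤ α * 1 * m := by
          have hα := H.one_le_α
          have ha' := H.a_le
          gcongr
      _ = m * α := by ring
  have h8 : a * b * (ρ - 1 / ρ) ^ 2 ≤ a * b * (2 * z) ^ 2 := by gcongr
  rw [e]
  linarith [H.le_k]

lemma tanPot₁_nonneg (H : PotBounds α β m p C a b k) {w : ℝ} (ht : 0 < tan w)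
    (h : a * tan w ^ 2 ≤ b) : 0 ≤ tanPot₁ (a ^ 2) (b ^ 2) w := by
  have ha := H.a_pos
  have : (a * tan w ^ 2) ^ 2 ≤ b ^ 2 := by gcongr
  unfold tanPot₁
  refine mul_nonneg (by positivity) ?_
  rw [neg_add_eq_sub, sub_nonneg, le_div_iff₀ (by positivity)]
  linarith

lemma tanPot₁_nonpos (H : PotBounds α β m p C a b k) {w : ℝ} (ht : 0 < tan w)
    (h : b ≤ a * tan w ^ 2) : tanPot₁ (a ^ 2) (b ^ 2) w ≤ 0 := by
  have hb := H.b_pos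
  have : b ^ 2 ≤ (a * tan w ^ 2) ^ 2 := by gcongr
  unfold tanPot₁
  refine mul_nonpos_of_nonneg_of_nonpos (by positivity) ?_
  rw [neg_add_eq_sub, sub_nonpos, div_le_iff₀ (by positivity)]
  linarith

lemma sq_tan_le (H : PotBounds α β m p C a b k) {w : ℝ}
    (h : 0 ≤ tanPot k (a ^ 2) (b ^ 2) w) : a ^ 2 * tan w ^ 2 ≤ C * (m * α) := by
  have : 0 ≤ b ^ 2 / tan w ^ 2 := by positivity
  unfold tanPot at h
  linarith [H.k_le]

lemma sq_tan_le' (H : PotBounds α β m p C a b k) {w : ℝ}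
    (h : 0 ≤ tanPot k (a ^ 2) (b ^ 2) w) : tan w ^ 2 ≤ 2 * C * p := by
  have h1 := H.sq_tan_le h
  have h2 := H.le_a_sq
  have hα : 0 < α := by linarith [H.one_le_α]
  have hC : 0 ≤ C := by linarith [H.one_le_C]
  have h3 : C * (m * α) ≤ C * (p * α * α) := by have := H.m_le; gcongr
  have h4 : 3 / 4 * α ^ 2 * tan w ^ 2 ≤ a ^ 2 * tan w ^ 2 := by gcongr
  have h5 : 3 / 4 * tan w ^ 2 * α ^ 2 ≤ C * p * α ^ 2 := by linarith
  have h6 := le_of_mul_le_mul_right h5 (by positivity)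
  have : 0 ≤ C * p := mul_nonneg hC H.p_nonneg
  linarith

lemma neg_tanPot₂_le (H : PotBounds α β m p C a b k) {w : ℝ} (ht : 0 < tan w)
    (h : b ≤ a * tan w ^ 2) :
    -tanPot₂ (a ^ 2) (b ^ 2) w ≤ 8 * a ^ 2 * (1 + tan w ^ 2) ^ 2 := by
  have hb := H.b_pos
  have h1 : b ^ 2 / tan w ^ 4 ≤ a ^ 2 := by
    rw [div_le_iff₀ (by positivity)]
    have : b ^ 2 ≤ (a * tan w ^ 2) ^ 2 := by gcongr
    linarith
  have e : -tanPot₂ (a ^ 2) (b ^ 2) w = a ^ 2 * (2 + 8 * tan w ^ 2 + 6 * tan w ^ 4) +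
      b ^ 2 / tan w ^ 4 * (2 * tan w ^ 4 + 8 * tan w ^ 2 + 6) := by
    unfold tanPot₂
    field_simp
  have : b ^ 2 / tan w ^ 4 * (2 * tan w ^ 4 + 8 * tan w ^ 2 + 6) ≤
      a ^ 2 * (2 * tan w ^ 4 + 8 * tan w ^ 2 + 6) := by gcongr
  rw [e]
  linarith

lemma tanPot₂_nonpos (a b w : ℝ) : tanPot₂ (a ^ 2) (b ^ 2) w ≤ 0 := by
  unfold tanPot₂
  rw [neg_nonpos]
  positivity

lemma neg_tanPot₁_le {w : ℝ} (ht : 0 < tan w) (a b : ℝ) :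
    -tanPot₁ (a ^ 2) (b ^ 2) w ≤ 2 * (1 + tan w ^ 2) * tan w * a ^ 2 := by
  have : 0 ≤ (1 + tan w ^ 2) * (2 * b ^ 2 / tan w ^ 3) := by positivity
  unfold tanPot₁
  linarith

lemma neg_tanPot₃_le {w : ℝ} (ht : 0 < tan w) (a b : ℝ) :
    -tanPot₃ (a ^ 2) (b ^ 2) w ≤
      (1 + tan w ^ 2) * (a ^ 2 * (16 * tan w + 24 * tan w ^ 3)) := by
  have : 0 ≤ (1 + tan w ^ 2) * (b ^ 2 * (16 / tan w ^ 3 + 24 / tan w ^ 5)) := by positivity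
  unfold tanPot₃
  linarith

/-- Past the maximum of the potential, its derivative is comparable to that of `-a² tan²`. -/
lemma le_neg_tanPot₁ (H : PotBounds α β m p C a b k) {w : ℝ} (ht : 0 < tan w)
    (h : b * (1 + 1 / (2 * β)) ^ 2 ≤ a * tan w ^ 2) :
    2 * (1 + tan w ^ 2) * tan w * a ^ 2 ≤ (1 + β) * -tanPot₁ (a ^ 2) (b ^ 2) w := by
  have hb := H.b_pos
  have hβ : 0 < β := by linarith [H.one_le_β]
  have h1 : b ^ 2 * (1 + 2 / β) ≤ a ^ 2 * tan w ^ 4 := by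
    have e1 : (b * (1 + 1 / (2 * β)) ^ 2) ^ 2 ≤ (a * tan w ^ 2) ^ 2 := by gcongr
    have e2 : 1 + 2 / β ≤ (1 + 1 / (2 * β)) ^ 4 := by
      have h := one_add_mul_le_pow (a := 1 / (2 * β)) (by
        have : 0 ≤ 1 / (2 * β) := by positivity
        linarith) 4
      refine le_trans (le_of_eq ?_) h
      push_cast
      field_simp
      ring
    calc b ^ 2 * (1 + 2 / β) ≤ b ^ 2 * (1 + 1 / (2 * β)) ^ 4 := by gcongr
      _ ≤ a ^ 2 * tan w ^ 4 := by linarith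
  have h2 : b ^ 2 * (1 + β) ≤ a ^ 2 * tan w ^ 4 * β := by
    have : b ^ 2 * (1 + 2 / β) * β = b ^ 2 * (β + 2) := by field_simp
    have h3 := mul_le_mul_of_nonneg_right h1 hβ.le
    nlinarith [sq_nonneg b]
  have e : (1 + β) * -tanPot₁ (a ^ 2) (b ^ 2) w - 2 * (1 + tan w ^ 2) * tan w * a ^ 2
      = 2 * (1 + tan w ^ 2) * ((a ^ 2 * tan w ^ 4 * β - b ^ 2 * (1 + β)) / tan w ^ 3) := by
    unfold tanPot₁
    field_simp
    ring
  have : 0 ≤ 2 * (1 + tan w ^ 2) * ((a ^ 2 * tan w ^ 4 * β - b ^ 2 * (1 + β)) / tan w ^ 3) := by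
    have : 0 ≤ a ^ 2 * tan w ^ 4 * β - b ^ 2 * (1 + β) := by linarith
    positivity
  linarith

lemma b_le_of_le (H : PotBounds α β m p C a b k) {t : ℝ}
    (h : b * (1 + 1 / (2 * β)) ^ 2 ≤ t) : b ≤ t := by
  have hβ : 0 < β := by linarith [H.one_le_β]
  have : 1 ≤ (1 + 1 / (2 * β)) ^ 2 := one_le_pow₀ (by
    have : 0 < 1 / (2 * β) := by positivity
    linarith)
  nlinarith [H.b_pos]

/-- The constant `K` for which `η = K α m ^ (1 / 3)` is an admissible shift in the adiabatic
invariant. -/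
noncomputable def shiftConst (β p C : ℝ) : ℝ := 12 * (1 + β) * (1 + 2 * C * p) * C

lemma le_shiftConst (H : PotBounds α β m p C a b k) :
    12 * (1 + 2 * C * p) * C ≤ shiftConst β p C ∧ 12 * (1 + 2 * C * p) ≤ shiftConst β p C ∧
    12 * (1 + 2 * C * p) * (1 + β) ≤ shiftConst β p C ∧ 12 ≤ shiftConst β p C := by
  have hp := H.p_nonneg
  have hC := H.one_le_C
  have hβ := H.one_le_β
  have h0 : 0 ≤ C * p := by positivity
  have h1 : 1 ≤ 1 + 2 * C * p := by linarith
  have e : shiftConst β p C = 12 * (1 + 2 * C * p) * C * (1 + β) := by unfold shiftConst; ring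
  have h2 : 12 ≤ 12 * (1 + 2 * C * p) := by linarith
  have h3 : 12 * (1 + 2 * C * p) ≤ 12 * (1 + 2 * C * p) * C :=
    le_mul_of_one_le_right (by linarith) hC
  have h4 : 12 * (1 + 2 * C * p) * C ≤ shiftConst β p C := by
    rw [e]; exact le_mul_of_one_le_right (by linarith) (by linarith)
  refine ⟨h4, h3.trans h4, ?_, h2.trans (h3.trans h4)⟩
  rw [e]
  gcongr

variable {h η : ℝ}

lemma sq_tanPot₁_le (H : PotBounds α β m p C a b k) (hh : 1 ≤ h) (hm : h ^ 3 = m)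
    (hη : η = shiftConst β p C * (α * h)) {w : ℝ} (ht : 0 < tan w) (hb : b ≤ a * tan w ^ 2)
    (hQ : 0 ≤ tanPot k (a ^ 2) (b ^ 2) w) : tanPot₁ (a ^ 2) (b ^ 2) w ^ 2 ≤ η ^ 3 / 3 := by
  have h1 := neg_tanPot₁_le ht a b
  have h0 : 0 ≤ -tanPot₁ (a ^ 2) (b ^ 2) w := by linarith [H.tanPot₁_nonpos ht hb]
  have h2 := H.sq_tan_le hQ
  have h3 := H.sq_tan_le' hQ
  have hC := H.one_le_C
  have hα := H.one_le_α
  have ha : a ^ 2 ≤ α ^ 2 := by have := H.a_le; have := H.a_pos; gcongr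
  have hmα := H.mα_pos
  set T := 1 + 2 * C * p with hT
  have hT1 : 1 ≤ T := by nlinarith [H.p_nonneg]
  have hT3 : 1 + tan w ^ 2 ≤ T := by linarith
  have hK : 12 * T * C ≤ shiftConst β p C := H.le_shiftConst.1
  calc tanPot₁ (a ^ 2) (b ^ 2) w ^ 2 = (-tanPot₁ (a ^ 2) (b ^ 2) w) ^ 2 := by ring
    _ ≤ (2 * (1 + tan w ^ 2) * tan w * a ^ 2) ^ 2 := by gcongr
    _ = 4 * (1 + tan w ^ 2) ^ 2 * a ^ 2 * (a ^ 2 * tan w ^ 2) := by ring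
    _ ≤ 4 * T ^ 2 * α ^ 2 * (C * (m * α)) := by
        gcongr
    _ = 4 * (T ^ 2 * C) * (α * h) ^ 3 := by rw [← hm]; ring
    _ ≤ 576 * (T ^ 3 * C ^ 3) * (α * h) ^ 3 := by
        refine mul_le_mul_of_nonneg_right ?_ (by positivity)
        have e1 : T ^ 2 ≤ T ^ 3 := pow_le_pow_right₀ hT1 (by norm_num)
        have e2 : C ≤ C ^ 3 := le_self_pow₀ hC (by norm_num)
        have e3 : T ^ 2 * C ≤ T ^ 3 * C ^ 3 := by gcongr
        have : 0 ≤ T ^ 3 * C ^ 3 := by positivity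
        linarith
    _ = (12 * T * C * (α * h)) ^ 3 / 3 := by ring
    _ ≤ η ^ 3 / 3 := by rw [hη]; gcongr

lemma neg_tanPot₂_le_sq (H : PotBounds α β m p C a b k) (hh : 1 ≤ h)
    (hη : η = shiftConst β p C * (α * h)) {w : ℝ} (ht : 0 < tan w) (hb : b ≤ a * tan w ^ 2)
    (hQ : 0 ≤ tanPot k (a ^ 2) (b ^ 2) w) : -tanPot₂ (a ^ 2) (b ^ 2) w ≤ η ^ 2 / 4 := by
  have h1 := H.neg_tanPot₂_le ht hb
  have h3 := H.sq_tan_le' hQ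
  have hα := H.one_le_α
  have ha : a ^ 2 ≤ α ^ 2 := by have := H.a_le; have := H.a_pos; gcongr
  set T := 1 + 2 * C * p with hT
  have hT1 : 1 ≤ T := by nlinarith [H.p_nonneg, H.one_le_C]
  have hT3 : 1 + tan w ^ 2 ≤ T := by linarith
  have hK : 12 * T ≤ shiftConst β p C := H.le_shiftConst.2.1
  have hK0 : 0 ≤ shiftConst β p C := by linarith
  calc -tanPot₂ (a ^ 2) (b ^ 2) w ≤ 8 * a ^ 2 * (1 + tan w ^ 2) ^ 2 := h1
    _ ≤ 36 * α ^ 2 * T ^ 2 := by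
        gcongr
        norm_num
    _ = (12 * T * (α * 1)) ^ 2 / 4 := by ring
    _ ≤ η ^ 2 / 4 := by rw [hη]; gcongr

lemma neg_tanPot₃_le_mul (H : PotBounds α β m p C a b k) (hh : 1 ≤ h)
    (hη : η = shiftConst β p C * (α * h)) {w : ℝ} (ht : 0 < tan w)
    (hb : b * (1 + 1 / (2 * β)) ^ 2 ≤ a * tan w ^ 2)
    (hQ : 0 ≤ tanPot k (a ^ 2) (b ^ 2) w) :
    -tanPot₃ (a ^ 2) (b ^ 2) w ≤ η * -tanPot₁ (a ^ 2) (b ^ 2) w := by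
  have h0 : 0 ≤ -tanPot₁ (a ^ 2) (b ^ 2) w := by
    linarith [H.tanPot₁_nonpos ht (H.b_le_of_le hb)]
  have h1 := H.le_neg_tanPot₁ ht hb
  have h3 := H.sq_tan_le' hQ
  have hα := H.one_le_α
  set T := 1 + 2 * C * p with hT
  have hT1 : 1 ≤ T := by nlinarith [H.p_nonneg, H.one_le_C]
  have hK : 12 * T * (1 + β) ≤ shiftConst β p C := H.le_shiftConst.2.2.1
  have hK0 : 0 ≤ shiftConst β p C := by linarith [H.le_shiftConst.2.2.2]
  have hαh : 1 ≤ α * h := one_le_mul_of_one_le_of_one_le hα hh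
  calc -tanPot₃ (a ^ 2) (b ^ 2) w
      ≤ (1 + tan w ^ 2) * (a ^ 2 * (16 * tan w + 24 * tan w ^ 3)) := neg_tanPot₃_le ht a b
    _ = (8 + 12 * tan w ^ 2) * (2 * (1 + tan w ^ 2) * tan w * a ^ 2) := by ring
    _ ≤ 12 * T * ((1 + β) * -tanPot₁ (a ^ 2) (b ^ 2) w) := by
        gcongr
        linarith
    _ = 12 * T * (1 + β) * -tanPot₁ (a ^ 2) (b ^ 2) w := by ring
    _ ≤ η * -tanPot₁ (a ^ 2) (b ^ 2) w := by
        gcongr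
        rw [hη]
        exact hK.trans (le_mul_of_one_le_right hK0 hαh)

lemma mem_Ioo_of_mem_Icc {w₁ w₂ x : ℝ} (h₁ : w₁ ∈ Ioo 0 (π / 2)) (h₂ : w₂ ∈ Ioo 0 (π / 2))
    (hx : x ∈ Icc w₁ w₂) : x ∈ Ioo 0 (π / 2) :=
  ⟨h₁.1.trans_le hx.1, hx.2.trans_lt h₂.2⟩

lemma tan_le_tan {x y : ℝ} (hx : x ∈ Ioo 0 (π / 2)) (hy : y ∈ Ioo 0 (π / 2)) (hxy : x ≤ y) :
    tan x ≤ tan y :=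
  strictMonoOn_tan.monotoneOn ⟨by linarith [hx.1, pi_pos], hx.2⟩
    ⟨by linarith [hy.1, pi_pos], hy.2⟩ hxy

lemma le_of_tan_le_tan {x y : ℝ} (hx : x ∈ Ioo 0 (π / 2)) (hy : y ∈ Ioo 0 (π / 2))
    (hxy : tan x ≤ tan y) : x ≤ y :=
  (strictMonoOn_tan.le_iff_le ⟨by linarith [hx.1, pi_pos], hx.2⟩
    ⟨by linarith [hy.1, pi_pos], hy.2⟩).1 hxy

lemma arctan_mem {τ : ℝ} (hτ : 0 < τ) : arctan τ ∈ Ioo 0 (π / 2) :=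
  ⟨arctan_pos.2 hτ, arctan_lt_pi_div_two τ⟩

lemma tanPot_le_tanPot (H : PotBounds α β m p C a b k) {x y : ℝ} (hx : x ∈ Ioo 0 (π / 2))
    (hy : y ∈ Ioo 0 (π / 2)) (hxy : x ≤ y) (hb : b ≤ a * tan x ^ 2) :
    tanPot k (a ^ 2) (b ^ 2) y ≤ tanPot k (a ^ 2) (b ^ 2) x := by
  refine le_of_hasDerivAt_nonpos hxy
    (fun z hz => hasDerivAt_tanPot k (a ^ 2) (b ^ 2) (mem_Ioo_of_mem_Icc hx hy hz)) fun z hz => ?_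
  have hz' := mem_Ioo_of_mem_Icc hx hy hz
  refine H.tanPot₁_nonpos (tan_pos_of_mem hz') (hb.trans ?_)
  have := H.a_pos
  have := tan_pos_of_mem hx
  have := tan_le_tan hx hz' hz.1
  gcongr

lemma le_sq_tanPot₁ (H : PotBounds α β m p C a b k) {w : ℝ} (ht : 0 < tan w)
    (hb : b * (1 + 1 / (2 * β)) ^ 2 ≤ a * tan w ^ 2)
    (hQ : tanPot k (a ^ 2) (b ^ 2) w ≤ m * α) :
    3 * (m * α ^ 3) ≤ (1 + β) ^ 2 * tanPot₁ (a ^ 2) (b ^ 2) w ^ 2 := by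
  have h1 := H.le_neg_tanPot₁ ht hb
  have hb' := H.b_le_of_le hb
  have ha := H.a_pos
  have hb0 := H.b_pos
  have h2 : m * α ≤ a ^ 2 * tan w ^ 2 := by
    have e := tanPot_eq a b k ht.ne'
    have h3 : b / tan w ≤ a * tan w := by
      rw [div_le_iff₀ ht]; linarith
    have h4 : 0 ≤ b / tan w := by positivity
    have h5 : (a * tan w - b / tan w) ^ 2 ≤ (a * tan w) ^ 2 := by
      apply pow_le_pow_left₀ <;> linarith
    have := H.le_k
    nlinarith
  have hmα := H.mα_pos
  have h3 := H.le_a_sq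
  calc 3 * (m * α ^ 3) = 4 * (m * α) * (3 / 4 * α ^ 2) := by ring
    _ ≤ 4 * (a ^ 2 * tan w ^ 2) * a ^ 2 := by gcongr
    _ = (2 * 1 * tan w * a ^ 2) ^ 2 := by ring
    _ ≤ (2 * (1 + tan w ^ 2) * tan w * a ^ 2) ^ 2 := by
        gcongr
        nlinarith [sq_nonneg (tan w)]
    _ ≤ ((1 + β) * -tanPot₁ (a ^ 2) (b ^ 2) w) ^ 2 := by gcongr
    _ = _ := by ring

/-- The constant in the estimate up to the Airy turning point. -/
noncomputable def airyConst (β p C : ℝ) : ℝ :=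
  4 * (1 + shiftConst β p C) ^ 6 * C * (1 + β) ^ 2

/-- The adiabatic invariant bounds the solution up to the turning point, where `g ^ 2` is the
Airy scale of the potential. -/
lemma sq_le_of_adiabatic_le {β C K h g rx r Qx Q D Ux Vx U S : ℝ} (hh : 1 ≤ h) (hg0 : 0 < g)
    (hβ : 0 ≤ β) (hC : 0 < C) (hK0 : 0 ≤ K) (hrx0 : 0 < rx) (hrw0 : 0 < r)
    (hQx : (h * g) ^ 2 ≤ Qx) (hQw : 0 ≤ Q) (hrx2 : rx ^ 2 = Qx + K * g ^ 2)
    (hrw2 : r ^ 2 = Q + K * g ^ 2)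
    (hD : Q ≤ (h * g) ^ 2 → 3 * g ^ 6 ≤ (1 + β) ^ 2 * D ^ 2)
    (hE : Vx ^ 2 + Qx * Ux ^ 2 ≤ C * (h * g) ^ 2 * S)
    (hchain : (Q / r + 5 / 16 * (D ^ 2 / r ^ 5)) * U ^ 2 ≤
      2 * (Vx ^ 2 + (Qx + K * g ^ 2) * Ux ^ 2) / rx) :
    U ^ 2 ≤ 4 * (1 + K) ^ 6 * C * (1 + β) ^ 2 * h * S := by
  have hh0 : 0 < h := by linarith
  have hh1 : (1 : ℝ) ≤ h ^ 2 := one_le_pow₀ hh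
  have hrx : h * g ≤ rx := by
    refine le_of_sq_le_sq ?_ hrx0.le
    rw [hrx2]; nlinarith [sq_nonneg g]
  have hηQ : K * g ^ 2 ≤ K * Qx := by
    have : g ^ 2 ≤ Qx := by
      rw [mul_pow] at hQx
      nlinarith [sq_nonneg g]
    gcongr
  have hS : 0 ≤ S := by
    have h1 : 0 ≤ C * (h * g) ^ 2 * S := by
      refine le_trans ?_ hE
      have : 0 ≤ Qx := (sq_nonneg _).trans hQx
      positivity
    exact nonneg_of_mul_nonneg_right h1 (mul_pos hC (by positivity))
  have hG0 : 2 * (Vx ^ 2 + (Qx + K * g ^ 2) * Ux ^ 2) / rx ≤ 2 * (1 + K) * C * h * g * S := by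
    rw [div_le_iff₀ hrx0]
    have h1 : Vx ^ 2 + (Qx + K * g ^ 2) * Ux ^ 2 ≤ (1 + K) * (C * (h * g) ^ 2 * S) := by
      calc Vx ^ 2 + (Qx + K * g ^ 2) * Ux ^ 2 ≤ Vx ^ 2 + (Qx + K * Qx) * Ux ^ 2 := by gcongr
        _ ≤ (1 + K) * (Vx ^ 2 + Qx * Ux ^ 2) := by nlinarith [sq_nonneg Vx]
        _ ≤ _ := by gcongr
    calc 2 * (Vx ^ 2 + (Qx + K * g ^ 2) * Ux ^ 2) ≤ 2 * ((1 + K) * (C * (h * g) ^ 2 * S)) := by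
          gcongr
      _ = 2 * (1 + K) * C * h * g * S * (h * g) := by ring
      _ ≤ 2 * (1 + K) * C * h * g * S * rx := by gcongr
  have hfin := hchain.trans hG0
  have hK1 : 1 ≤ 1 + K := by linarith
  have hβ1 : 1 ≤ (1 + β) ^ 2 := one_le_pow₀ (by linarith)
  rcases le_or_gt (g ^ 2) Q with hq | hq
  · have hQpos : 0 < Q := lt_of_lt_of_le (by positivity) hq
    have h1 : r * g ≤ (1 + K) * Q := by
      refine le_of_sq_le_sq ?_ (by positivity)
      calc (r * g) ^ 2 = (Q + K * g ^ 2) * g ^ 2 := by rw [mul_pow, hrw2]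
        _ ≤ (Q + K * Q) * Q := by gcongr
        _ = 1 * (1 + K) * Q ^ 2 := by ring
        _ ≤ (1 + K) * (1 + K) * Q ^ 2 := by gcongr
        _ = _ := by ring
    have h2 : Q / r * U ^ 2 ≤ 2 * (1 + K) * C * h * g * S := by
      refine le_trans ?_ hfin
      have : 0 ≤ 5 / 16 * (D ^ 2 / r ^ 5) * U ^ 2 := by positivity
      linarith
    have h3 : g ≤ (1 + K) * (Q / r) := by
      rw [← mul_div_assoc, le_div_iff₀ hrw0]; linarith
    have h4 : g * U ^ 2 ≤ g * (2 * (1 + K) ^ 2 * C * h * S) := by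
      calc g * U ^ 2 ≤ (1 + K) * (Q / r) * U ^ 2 := by gcongr
        _ = (1 + K) * (Q / r * U ^ 2) := by ring
        _ ≤ (1 + K) * (2 * (1 + K) * C * h * g * S) := by gcongr
        _ = _ := by ring
    refine (le_of_mul_le_mul_left h4 hg0).trans ?_
    have h5 : 2 * (1 + K) ^ 2 * 1 ≤ 4 * (1 + K) ^ 6 * (1 + β) ^ 2 := by
      gcongr
      · norm_num
      · norm_num
    calc 2 * (1 + K) ^ 2 * C * h * S = 2 * (1 + K) ^ 2 * 1 * (C * h * S) := by ring
      _ ≤ 4 * (1 + K) ^ 6 * (1 + β) ^ 2 * (C * h * S) := by gcongr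
      _ = _ := by ring
  · have hD2 := hD (by rw [mul_pow]; nlinarith [sq_nonneg g])
    have h1 : r ≤ (1 + K) * g := by
      refine le_of_sq_le_sq ?_ (by positivity)
      calc r ^ 2 = Q + K * g ^ 2 := by rw [hrw2]
        _ ≤ 1 * (1 + K) * g ^ 2 := by linarith
        _ ≤ (1 + K) * (1 + K) * g ^ 2 := by gcongr
        _ = _ := by ring
    have h2 : 5 / 16 * (D ^ 2 / r ^ 5) * U ^ 2 ≤ 2 * (1 + K) * C * h * g * S := by
      refine le_trans ?_ hfin
      have : 0 ≤ Q / r * U ^ 2 := by positivity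
      linarith
    have h3 : 3 * g ≤ (1 + β) ^ 2 * (1 + K) ^ 5 * (D ^ 2 / r ^ 5) := by
      rw [← mul_div_assoc, le_div_iff₀ (by positivity)]
      calc 3 * g * r ^ 5 ≤ 3 * g * ((1 + K) * g) ^ 5 := by gcongr
        _ = (1 + K) ^ 5 * (3 * g ^ 6) := by ring
        _ ≤ (1 + K) ^ 5 * ((1 + β) ^ 2 * D ^ 2) := by gcongr
        _ = _ := by ring
    have h4 : g * U ^ 2 ≤ g * (32 / 15 * (1 + K) ^ 6 * C * (1 + β) ^ 2 * h * S) := by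
      calc g * U ^ 2 = 1 / 3 * (3 * g) * U ^ 2 := by ring
        _ ≤ 1 / 3 * ((1 + β) ^ 2 * (1 + K) ^ 5 * (D ^ 2 / r ^ 5)) * U ^ 2 := by gcongr
        _ = 16 / 15 * ((1 + β) ^ 2 * (1 + K) ^ 5) * (5 / 16 * (D ^ 2 / r ^ 5) * U ^ 2) := by
            ring
        _ ≤ 16 / 15 * ((1 + β) ^ 2 * (1 + K) ^ 5) * (2 * (1 + K) * C * h * g * S) := by gcongr
        _ = _ := by ring
    refine (le_of_mul_le_mul_left h4 hg0).trans ?_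
    gcongr
    norm_num

/-- The estimate between the maximum of the potential and the turning point. -/
lemma sq_le_of_nonneg (H : PotBounds α β m p C a b k) (hh : 1 ≤ h) (hm : h ^ 3 = m)
    {u v : ℝ → ℝ} (hu : ∀ w ∈ Ioo 0 (π / 2), HasDerivAt u (v w) w)
    (hv : ∀ w ∈ Ioo 0 (π / 2), HasDerivAt v (-tanPot k (a ^ 2) (b ^ 2) w * u w) w)
    {x w S : ℝ} (hx : x ∈ Ioo 0 (π / 2)) (hw : w ∈ Ioo 0 (π / 2)) (hxw : x ≤ w)
    (hb : b * (1 + 1 / (2 * β)) ^ 2 ≤ a * tan x ^ 2)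
    (hQx : m * α ≤ tanPot k (a ^ 2) (b ^ 2) x)
    (hE : v x ^ 2 + tanPot k (a ^ 2) (b ^ 2) x * u x ^ 2 ≤ C * (m * α) * S)
    (hQw : 0 ≤ tanPot k (a ^ 2) (b ^ 2) w) :
    u w ^ 2 ≤ airyConst β p C * h * S := by
  have ha := H.a_pos
  have hα : 0 < α := by linarith [H.one_le_α]
  have hβ : 0 < β := by linarith [H.one_le_β]
  have hC : 0 < C := by linarith [H.one_le_C]
  have hh0 : 0 < h := by linarith
  set K := shiftConst β p C with hK
  have hK0 : 0 < K := by linarith [H.le_shiftConst.2.2.2]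
  set η := K * (α * h) with hη
  have hη0 : 0 < η := by positivity
  have hI : ∀ z ∈ Icc x w, z ∈ Ioo 0 (π / 2) := fun z hz => mem_Ioo_of_mem_Icc hx hw hz
  have htan : ∀ z ∈ Icc x w, 0 < tan z := fun z hz => tan_pos_of_mem (hI z hz)
  have hbz : ∀ z ∈ Icc x w, b * (1 + 1 / (2 * β)) ^ 2 ≤ a * tan z ^ 2 := fun z hz => by
    have := tan_pos_of_mem hx
    have := tan_le_tan hx (hI z hz) hz.1
    exact hb.trans (by gcongr)
  have hbz' : ∀ z ∈ Icc x w, b ≤ a * tan z ^ 2 := fun z hz => H.b_le_of_le (hbz z hz)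
  have hQ0 : ∀ z ∈ Icc x w, 0 ≤ tanPot k (a ^ 2) (b ^ 2) z := fun z hz =>
    hQw.trans (H.tanPot_le_tanPot (hI z hz) hw hz.2 (hbz' z hz))
  have hxm : x ∈ Icc x w := left_mem_Icc.2 hxw
  have hwm : w ∈ Icc x w := right_mem_Icc.2 hxw
  have hG := adiabatic_le_of_le hxw hη0 (fun z hz => hu z (hI z hz)) (fun z hz => hv z (hI z hz))
    (fun z hz => hasDerivAt_tanPot k (a ^ 2) (b ^ 2) (hI z hz))
    (fun z hz => hasDerivAt_tanPot₁ (a ^ 2) (b ^ 2) (hI z hz))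
    (fun z hz => hasDerivAt_tanPot₂ (a ^ 2) (b ^ 2) (hI z hz)) hQ0
    (fun z hz => H.tanPot₁_nonpos (htan z hz) (hbz' z hz))
    (fun z hz => H.sq_tanPot₁_le hh hm hη (htan z hz) (hbz' z hz) (hQ0 z hz))
    (fun z hz => H.neg_tanPot₂_le_sq hh hη (htan z hz) (hbz' z hz) (hQ0 z hz))
    (fun z hz => H.neg_tanPot₃_le_mul hh hη (htan z hz) (hbz z hz) (hQ0 z hz))
  have hposx : 0 < tanPot k (a ^ 2) (b ^ 2) x + η := add_pos_of_nonneg_of_pos (hQ0 x hxm) hη0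
  have hposw : 0 < tanPot k (a ^ 2) (b ^ 2) w + η := add_pos_of_nonneg_of_pos hQw hη0
  have hup := adiabatic_le (v := v x) (u := u x) hη0 (hQ0 x hxm) (Real.sqrt_pos.2 hposx)
    (Real.sq_sqrt hposx.le)
    (H.sq_tanPot₁_le hh hm hη (htan x hxm) (hbz' x hxm) (hQ0 x hxm))
    (H.neg_tanPot₂_le_sq hh hη (htan x hxm) (hbz' x hxm) (hQ0 x hxm))
  have hlow := mul_sq_le_adiabatic (u := u w) (v := v w) (Q := tanPot k (a ^ 2) (b ^ 2) w)
    (Q₁ := tanPot₁ (a ^ 2) (b ^ 2) w) (Real.sqrt_pos.2 hposw) (tanPot₂_nonpos a b w)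
  have hD : tanPot k (a ^ 2) (b ^ 2) w ≤ m * α →
      3 * (m * α ^ 3) ≤ (1 + β) ^ 2 * tanPot₁ (a ^ 2) (b ^ 2) w ^ 2 :=
    fun hq => H.le_sq_tanPot₁ (htan w hwm) (hbz w hwm) hq
  have hrx2 := Real.sq_sqrt hposx.le
  have hrw2 := Real.sq_sqrt hposw.le
  have hrx0 := Real.sqrt_pos.2 hposx
  have hrw0 := Real.sqrt_pos.2 hposw
  have hchain := hlow.trans (hG.trans hup)
  have hg0 : 0 < √(α * h) := Real.sqrt_pos.2 (by positivity)
  have hg2 : √(α * h) ^ 2 = α * h := Real.sq_sqrt (by positivity)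
  have hmg : m * α = (h * √(α * h)) ^ 2 := by rw [mul_pow, hg2, ← hm]; ring
  have hηg : η = K * √(α * h) ^ 2 := by rw [hη, hg2]
  have hg6 : √(α * h) ^ 6 = m * α ^ 3 := by
    rw [show √(α * h) ^ 6 = (√(α * h) ^ 2) ^ 3 by ring, hg2, ← hm]; ring
  rw [hmg] at hQx hE hD
  rw [← hg6] at hD
  rw [hηg] at hrx0 hrw0 hrx2 hrw2 hchain
  exact sq_le_of_adiabatic_le hh hg0 hβ.le hC hK0.le hrx0 hrw0 hQx hQw hrx2 hrw2 hD hE hchain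

/-- The estimate past the maximum of the potential, on both sides of the turning point. -/
lemma sq_le_of_le (H : PotBounds α β m p C a b k) (hh : 1 ≤ h) (hm : h ^ 3 = m)
    {u v : ℝ → ℝ} (hc : Continuous u) (h0 : u (π / 2) = 0)
    (hu : ∀ w ∈ Ioo 0 (π / 2), HasDerivAt u (v w) w)
    (hv : ∀ w ∈ Ioo 0 (π / 2), HasDerivAt v (-tanPot k (a ^ 2) (b ^ 2) w * u w) w)
    {x w S : ℝ} (hx : x ∈ Ioo 0 (π / 2)) (hw : w ∈ Ioo 0 (π / 2)) (hxw : x ≤ w)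
    (hb : b * (1 + 1 / (2 * β)) ^ 2 ≤ a * tan x ^ 2)
    (hQx : m * α ≤ tanPot k (a ^ 2) (b ^ 2) x)
    (hE : v x ^ 2 + tanPot k (a ^ 2) (b ^ 2) x * u x ^ 2 ≤ C * (m * α) * S) :
    u w ^ 2 ≤ airyConst β p C * h * S := by
  rcases le_or_gt 0 (tanPot k (a ^ 2) (b ^ 2) w) with hQw | hQw
  · exact H.sq_le_of_nonneg hh hm hu hv hx hw hxw hb hQx hE hQw
  · have hcont : ContinuousOn (tanPot k (a ^ 2) (b ^ 2)) (Icc x w) := fun z hz =>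
      (hasDerivAt_tanPot k _ _ (mem_Ioo_of_mem_Icc hx hw hz)).continuousAt.continuousWithinAt
    obtain ⟨y, hy, hQy⟩ := intermediate_value_Icc' hxw hcont
      ⟨hQw.le, H.mα_pos.le.trans hQx⟩
    have hy' := mem_Ioo_of_mem_Icc hx hw hy
    refine le_trans ?_ (H.sq_le_of_nonneg hh hm hu hv hx hy' hy.1 hb hQx hE hQy.ge)
    refine sq_le_sq_of_nonpos (q := π / 2) ⟨hy.2, hw.2.le⟩ hc.continuousOn
      (fun z hz => hu z ⟨hy'.1.trans hz.1, hz.2⟩) (fun z hz => hv z ⟨hy'.1.trans hz.1, hz.2⟩)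
      (fun z hz => ?_) h0
    rw [← hQy]
    refine H.tanPot_le_tanPot hy' ⟨hy'.1.trans hz.1, hz.2⟩ hz.1.le ?_
    have := H.a_pos
    have := tan_pos_of_mem hx
    have := tan_le_tan hx hy' hy.1
    exact (H.b_le_of_le hb).trans (by gcongr)

/-- The constant that compares the Sonin function with the size of the solution near the left end
point. -/
noncomputable def soninConst (β : ℝ) : ℝ := 1 + 2048 * β ^ 2 * (1 + 2 * β) ^ 2

/-- A bound near the left end point gives a bound on the Sonin function in the oscillatory
region. -/
lemma exists_sonin_le (H : PotBounds α β m p C a b k) {u v : ℝ → ℝ}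
    (hu : ∀ w ∈ Ioo 0 (π / 2), HasDerivAt u (v w) w) {σ s M : ℝ} (hσ : 0 < σ)
    (hσ2 : a * σ ^ 2 = b) (hs : 1 ≤ s) (hsm : s ^ 2 = m)
    (hM : ∀ w ∈ Ioo 0 (π / 2), tan w ≤ σ / (1 + s / (4 * β)) → |u w| ≤ M) :
    ∃ ξ ∈ Ioo 0 (π / 2), σ / (1 + s / (2 * β)) ≤ tan ξ ∧ tan ξ ≤ σ / (1 + s / (4 * β)) ∧
      u ξ ^ 2 + v ξ ^ 2 / tanPot k (a ^ 2) (b ^ 2) ξ ≤ soninConst β * M ^ 2 := by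
  have hβ1 := H.one_le_β
  have hβ : 0 < β := by linarith
  have ha := H.a_pos
  have hb := H.b_pos
  have hs0 : 0 < s := by linarith
  set τ₁ := σ / (1 + s / (2 * β)) with hτ₁
  set τ₂ := σ / (1 + s / (4 * β)) with hτ₂
  have hτ₁0 : 0 < τ₁ := by positivity
  have hdiff : σ / (16 * β * s) ≤ τ₂ - τ₁ := by
    have e : τ₂ - τ₁ = σ * s / (4 * β) / ((1 + s / (2 * β)) * (1 + s / (4 * β))) := by
      rw [hτ₁, hτ₂]
      field_simp
      ring
    rw [e, div_le_div_iff₀ (by positivity) (by positivity)]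
    have h1 : 1 + s / (2 * β) ≤ 2 * s := by
      have : s / (2 * β) ≤ s := div_le_self hs0.le (by linarith)
      linarith
    have h2 : 1 + s / (4 * β) ≤ 2 * s := by
      have : s / (4 * β) ≤ s := div_le_self hs0.le (by linarith)
      linarith
    calc σ * ((1 + s / (2 * β)) * (1 + s / (4 * β))) ≤ σ * ((2 * s) * (2 * s)) := by gcongr
      _ = σ * s / (4 * β) * (16 * β * s) := by field_simp; ring
  have hlt : τ₁ < τ₂ := by
    have : 0 < σ / (16 * β * s) := by positivity
    linarith
  have hτpos : ∀ τ ∈ Icc τ₁ τ₂, 0 < τ := fun τ hτ => hτ₁0.trans_le hτ.1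
  have hder : ∀ τ ∈ Icc τ₁ τ₂,
      HasDerivAt (fun τ => u (arctan τ)) (v (arctan τ) * (1 / (1 + τ ^ 2))) τ := fun τ hτ =>
    (hu _ (arctan_mem (hτpos τ hτ))).comp τ (hasDerivAt_arctan τ)
  obtain ⟨τ, hτ, hslope⟩ := exists_hasDerivAt_eq_slope (fun τ => u (arctan τ))
    (fun τ => v (arctan τ) * (1 / (1 + τ ^ 2))) hlt
    (fun τ hτ => (hder τ hτ).continuousAt.continuousWithinAt)
    (fun τ hτ => hder τ (Ioo_subset_Icc_self hτ))
  have hτI := Ioo_subset_Icc_self hτ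
  have hτ0 := hτpos τ hτI
  have hbd : ∀ τ ∈ Icc τ₁ τ₂, |u (arctan τ)| ≤ M := fun τ hτ =>
    hM _ (arctan_mem (hτpos τ hτ)) (by rw [tan_arctan]; exact hτ.2)
  have hM0 : 0 ≤ M := (abs_nonneg _).trans (hbd τ hτI)
  refine ⟨arctan τ, arctan_mem hτ0, by rw [tan_arctan]; exact hτ.1.le,
    by rw [tan_arctan]; exact hτ.2.le, ?_⟩
  have hQ : m * α ≤ tanPot k (a ^ 2) (b ^ 2) (arctan τ) := by
    have hρ : tan (arctan τ) = σ * (τ / σ) := by rw [tan_arctan]; field_simp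
    refine H.le_tanPot hσ hσ2 hs0 hsm (by positivity) hρ ?_ ?_
    · have h1 : τ / σ ≤ 1 := by
        rw [div_le_one hσ]
        refine hτ.2.le.trans (div_le_self hσ.le ?_)
        have : 0 < s / (4 * β) := by positivity
        linarith
      have : 0 < s / (2 * β) := by positivity
      linarith
    · rw [one_div_div, div_le_iff₀ hτ0]
      have := hτ.1.le
      rw [hτ₁, div_le_iff₀ (by positivity)] at this
      linarith
  have hτσ : τ ≤ σ := hτ.2.le.trans (div_le_self hσ.le (by
    have : 0 < s / (4 * β) := by positivity
    linarith))
  have hσβ : σ ^ 2 ≤ 2 * β := by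
    have h1 : 1 / 2 ≤ a := by linarith [H.le_a, H.one_le_α]
    nlinarith [H.b_le, sq_nonneg σ]
  have hτβ : 1 + τ ^ 2 ≤ 1 + 2 * β := by
    have : τ ^ 2 ≤ σ ^ 2 := by gcongr
    linarith
  have hv : |v (arctan τ)| ≤ (1 + 2 * β) * (32 * β * s * M / σ) := by
    have e : v (arctan τ) = (1 + τ ^ 2) *
        ((u (arctan τ₂) - u (arctan τ₁)) / (τ₂ - τ₁)) := by
      rw [← hslope]
      field_simp
    have h1 : |u (arctan τ₂) - u (arctan τ₁)| ≤ 2 * M := by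
      have := hbd τ₂ (right_mem_Icc.2 hlt.le)
      have := hbd τ₁ (left_mem_Icc.2 hlt.le)
      have := abs_sub (u (arctan τ₂)) (u (arctan τ₁))
      linarith
    have h2 : |u (arctan τ₂) - u (arctan τ₁)| / (τ₂ - τ₁) ≤ 2 * M / (σ / (16 * β * s)) := by
      gcongr
    rw [e, abs_mul, abs_of_pos (by positivity : 0 < 1 + τ ^ 2), abs_div,
      abs_of_pos (sub_pos.2 hlt)]
    refine mul_le_mul hτβ (h2.trans (le_of_eq ?_)) (div_nonneg (abs_nonneg _)
      (sub_pos.2 hlt).le) (by positivity)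
    field_simp
    ring
  have hmα := H.mα_pos
  have hv2 : v (arctan τ) ^ 2 / tanPot k (a ^ 2) (b ^ 2) (arctan τ) ≤
      2048 * β ^ 2 * (1 + 2 * β) ^ 2 * M ^ 2 := by
    rw [div_le_iff₀ (hmα.trans_le hQ)]
    have hασ : 1 / 2 ≤ α * σ ^ 2 := by
      have := H.a_le
      have := H.le_b
      nlinarith [sq_nonneg σ]
    calc v (arctan τ) ^ 2 = |v (arctan τ)| ^ 2 := (sq_abs _).symm
      _ ≤ ((1 + 2 * β) * (32 * β * s * M / σ)) ^ 2 := by gcongr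
      _ = 1024 * β ^ 2 * (1 + 2 * β) ^ 2 * M ^ 2 * (m / σ ^ 2) := by
          rw [← hsm]; field_simp; norm_num; ring
      _ ≤ 1024 * β ^ 2 * (1 + 2 * β) ^ 2 * M ^ 2 * (2 * (m * α)) := by
          gcongr
          rw [div_le_iff₀ (by positivity)]
          nlinarith [H.one_le_m]
      _ = 2048 * β ^ 2 * (1 + 2 * β) ^ 2 * M ^ 2 * (m * α) := by ring
      _ ≤ _ := by gcongr
  have hu2 : u (arctan τ) ^ 2 ≤ M ^ 2 := by
    rw [← sq_abs]
    gcongr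
    exact hbd τ hτI
  rw [soninConst]
  linarith

/-- A bound near the left end point gives a bound everywhere. -/
lemma sq_le (H : PotBounds α β m p C a b k) (hh : 1 ≤ h) (hm : h ^ 3 = m)
    {u v : ℝ → ℝ} (hc : Continuous u) (h0 : u (π / 2) = 0)
    (hu : ∀ w ∈ Ioo 0 (π / 2), HasDerivAt u (v w) w)
    (hv : ∀ w ∈ Ioo 0 (π / 2), HasDerivAt v (-tanPot k (a ^ 2) (b ^ 2) w * u w) w)
    {M : ℝ} (hM : ∀ w ∈ Ioo 0 (π / 2), α * m * tan w ^ 2 ≤ 32 * β ^ 3 → |u w| ≤ M)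
    {w : ℝ} (hw : w ∈ Ioo 0 (π / 2)) :
    u w ^ 2 ≤ airyConst β p C * soninConst β * (h * M ^ 2) := by
  have ha := H.a_pos
  have hb := H.b_pos
  have hα := H.one_le_α
  have hβ1 := H.one_le_β
  have hβ : 0 < β := by linarith
  have hC := H.one_le_C
  have hm1 := H.one_le_m
  have hmα := H.mα_pos
  set σ := √(b / a) with hσ
  have hσ0 : 0 < σ := Real.sqrt_pos.2 (by positivity)
  have hσ2 : a * σ ^ 2 = b := by rw [hσ, Real.sq_sqrt (by positivity)]; field_simp
  set s := √m with hs
  have hsm : s ^ 2 = m := Real.sq_sqrt (by linarith)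
  have hs1 : 1 ≤ s := Real.one_le_sqrt.2 hm1
  have hs0 : 0 < s := by linarith
  have hM' : ∀ w ∈ Ioo 0 (π / 2), tan w ≤ σ / (1 + s / (4 * β)) → |u w| ≤ M := by
    intro w hw hle
    refine hM w hw ?_
    have ht := tan_pos_of_mem hw
    have h1 : tan w * s ≤ 4 * β * σ := by
      rw [le_div_iff₀ (by positivity)] at hle
      have : tan w * (1 + s / (4 * β)) * (4 * β) = tan w * (4 * β) + tan w * s := by
        field_simp
      nlinarith
    have h2 : (tan w * s) ^ 2 ≤ (4 * β * σ) ^ 2 := by gcongr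
    have h3 : α * σ ^ 2 ≤ 2 * β := by
      nlinarith [H.le_a, H.b_le, sq_nonneg σ]
    calc α * m * tan w ^ 2 = α * (tan w * s) ^ 2 := by rw [← hsm]; ring
      _ ≤ α * (4 * β * σ) ^ 2 := by gcongr
      _ = 16 * β ^ 2 * (α * σ ^ 2) := by ring
      _ ≤ 16 * β ^ 2 * (2 * β) := by gcongr
      _ = 32 * β ^ 3 := by ring
  obtain ⟨ξ, hξ, hξ1, hξ2, hS⟩ := H.exists_sonin_le hu hσ0 hσ2 hs1 hsm hM'
  set S := soninConst β * M ^ 2 with hSdef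
  have hsc : 1 ≤ soninConst β := by
    have : 0 ≤ 2048 * β ^ 2 * (1 + 2 * β) ^ 2 := by positivity
    rw [soninConst]; linarith
  have hMS : M ^ 2 ≤ S := by nlinarith [sq_nonneg M]
  have hS0 : 0 ≤ S := (sq_nonneg M).trans hMS
  have hAC : C ≤ airyConst β p C * h := by
    have hK : 0 ≤ shiftConst β p C := by linarith [H.le_shiftConst.2.2.2]
    have h1 : 1 ≤ (1 + shiftConst β p C) ^ 6 := one_le_pow₀ (by linarith)
    have h2 : 1 ≤ (1 + β) ^ 2 := one_le_pow₀ (by linarith)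
    calc C = 1 * 1 * C * 1 * 1 := by ring
      _ ≤ 4 * (1 + shiftConst β p C) ^ 6 * C * (1 + β) ^ 2 * h := by
          gcongr
          norm_num
      _ = _ := rfl
  have goal_of_le : u w ^ 2 ≤ C * S →
      u w ^ 2 ≤ airyConst β p C * soninConst β * (h * M ^ 2) := fun hle => by
    calc u w ^ 2 ≤ C * S := hle
      _ ≤ airyConst β p C * h * S := by gcongr
      _ = _ := by rw [hSdef]; ring
  set x := arctan (σ * (1 + 1 / (2 * β))) with hx
  have hxI : x ∈ Ioo 0 (π / 2) := arctan_mem (by positivity)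
  have hxt : tan x = σ * (1 + 1 / (2 * β)) := tan_arctan _
  have hbx : b * (1 + 1 / (2 * β)) ^ 2 = a * tan x ^ 2 := by rw [hxt, ← hσ2]; ring
  have hdiv : 1 / (2 * β) ≤ s / (2 * β) := by gcongr
  have hs2 : 0 < s / (2 * β) := by positivity
  have hs4 : 0 < s / (4 * β) := by positivity
  have hQ : ∀ z ∈ Icc ξ x, m * α ≤ tanPot k (a ^ 2) (b ^ 2) z := by
    intro z hz
    have hzI := mem_Ioo_of_mem_Icc hξ hxI hz
    have hz1 := tan_le_tan hξ hzI hz.1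
    have hz2 := tan_le_tan hzI hxI hz.2
    have hzt := tan_pos_of_mem hzI
    refine H.le_tanPot hσ0 hσ2 hs0 hsm (ρ := tan z / σ) (by positivity) (by field_simp) ?_ ?_
    · rw [div_le_iff₀ hσ0]
      rw [hxt] at hz2
      nlinarith
    · rw [one_div_div, div_le_iff₀ hzt]
      have := hξ1.trans hz1
      rw [div_le_iff₀ (by positivity)] at this
      linarith
  set y := arctan σ with hy
  have hyI : y ∈ Ioo 0 (π / 2) := arctan_mem hσ0
  have hyt : tan y = σ := tan_arctan _
  have hξy : ξ ≤ y := le_of_tan_le_tan hξ hyI (by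
    rw [hyt]
    exact hξ2.trans (div_le_self hσ0.le (by linarith)))
  have hyx : y ≤ x := le_of_tan_le_tan hyI hxI (by
    rw [hyt, hxt]
    refine le_mul_of_one_le_right hσ0.le ?_
    have : 0 < 1 / (2 * β) := by positivity
    linarith)
  have hSon : ∀ z ∈ Icc ξ y, u z ^ 2 + v z ^ 2 / tanPot k (a ^ 2) (b ^ 2) z ≤ S := by
    intro z hz
    refine le_trans (sonin_le hz.1 (Q₁ := tanPot₁ (a ^ 2) (b ^ 2))
      (fun t ht => hu t ?_) (fun t ht => hv t ?_) (fun t ht => hasDerivAt_tanPot k _ _ ?_)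
      (fun t ht => hmα.trans_le (hQ t ⟨ht.1, ht.2.trans (hz.2.trans hyx)⟩)) (fun t ht => ?_)) hS
    all_goals have htI := mem_Ioo_of_mem_Icc hξ hyI ⟨ht.1, ht.2.trans hz.2⟩
    · exact htI
    · exact htI
    · exact htI
    · have ht0 := tan_pos_of_mem htI
      refine H.tanPot₁_nonneg ht0 ?_
      have := tan_le_tan htI hyI (ht.2.trans hz.2)
      rw [hyt] at this
      rw [← hσ2]
      gcongr
  have hE : ∀ z ∈ Icc y x, v z ^ 2 + tanPot k (a ^ 2) (b ^ 2) z * u z ^ 2 ≤ C * (m * α) * S := by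
    intro z hz
    have h1 := energy_le hz.1 (u := u) (v := v) (Q := tanPot k (a ^ 2) (b ^ 2))
      (Q₁ := tanPot₁ (a ^ 2) (b ^ 2))
      (fun t ht => hu t (mem_Ioo_of_mem_Icc hyI hxI ⟨ht.1, ht.2.trans hz.2⟩))
      (fun t ht => hv t (mem_Ioo_of_mem_Icc hyI hxI ⟨ht.1, ht.2.trans hz.2⟩))
      (fun t ht => hasDerivAt_tanPot k _ _ (mem_Ioo_of_mem_Icc hyI hxI ⟨ht.1, ht.2.trans hz.2⟩))
      (fun t ht => by
        have htI := mem_Ioo_of_mem_Icc hyI hxI ⟨ht.1, ht.2.trans hz.2⟩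
        refine H.tanPot₁_nonpos (tan_pos_of_mem htI) ?_
        have := tan_le_tan hyI htI ht.1
        rw [hyt] at this
        rw [← hσ2]
        gcongr)
    have hQy : 0 < tanPot k (a ^ 2) (b ^ 2) y := hmα.trans_le (hQ y ⟨hξy, hyx⟩)
    refine h1.trans ?_
    calc v y ^ 2 + tanPot k (a ^ 2) (b ^ 2) y * u y ^ 2
        = tanPot k (a ^ 2) (b ^ 2) y *
          (u y ^ 2 + v y ^ 2 / tanPot k (a ^ 2) (b ^ 2) y) := by field_simp; ring
      _ ≤ C * (m * α) * S :=
        mul_le_mul (H.tanPot_le (tan_pos_of_mem hyI).ne') (hSon y ⟨hξy, le_rfl⟩)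
          (by positivity) (by positivity)
  rcases le_total w ξ with h1 | h1
  · refine goal_of_le ?_
    have := hM' w hw ((tan_le_tan hw hξ h1).trans hξ2)
    have h2 : u w ^ 2 ≤ M ^ 2 := by
      rw [← sq_abs]; gcongr
    exact h2.trans (hMS.trans (le_mul_of_one_le_left hS0 hC))
  rcases le_total w y with h2 | h2
  · refine goal_of_le ?_
    have h3 := hSon w ⟨h1, h2⟩
    have h4 : 0 ≤ v w ^ 2 / tanPot k (a ^ 2) (b ^ 2) w :=
      div_nonneg (sq_nonneg _) (hmα.le.trans (hQ w ⟨h1, h2.trans hyx⟩))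
    exact (by linarith : u w ^ 2 ≤ S).trans (le_mul_of_one_le_left hS0 hC)
  rcases le_total w x with h3 | h3
  · refine goal_of_le ?_
    have h4 := hE w ⟨h2, h3⟩
    have h5 := hQ w ⟨h1, h3⟩
    have h6 : m * α * u w ^ 2 ≤ m * α * (C * S) := by
      have : m * α * u w ^ 2 ≤ tanPot k (a ^ 2) (b ^ 2) w * u w ^ 2 := by gcongr
      linarith [sq_nonneg (v w), mul_right_comm C (m * α) S, mul_left_comm (m * α) C S]
    exact le_of_mul_le_mul_left h6 hmα
  · refine (H.sq_le_of_le hh hm hc h0 hu hv hxI hw h3 hbx.le (hQ x ⟨hξy.trans hyx, le_rfl⟩)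
      (hE x ⟨hyx, le_rfl⟩)).trans (le_of_eq ?_)
    rw [hSdef]; ring

end PotBounds

/-- The parameters of the Jacobi equation satisfy the bounds needed for the asymptotic analysis. -/
lemma potBounds_jacobi {α β n : ℕ} {p : ℝ} (hα : 1 ≤ α) (hβ : 1 ≤ β) (hm : (n : ℝ) + 1 ≤ p * α) :
    PotBounds α β (n + 1) p (4 * p + 6 * β + 5) √((α : ℝ) ^ 2 - 1 / 4) √((β : ℝ) ^ 2 - 1 / 4)
      ((2 * n + α + β + 1) ^ 2 - ((α : ℝ) ^ 2 - 1 / 4) - ((β : ℝ) ^ 2 - 1 / 4)) := by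
  have hα' : (1 : ℝ) ≤ α := by exact_mod_cast hα
  have hβ' : (1 : ℝ) ≤ β := by exact_mod_cast hβ
  have hn : (0 : ℝ) ≤ n := n.cast_nonneg
  have ha2 : 3 / 4 * (α : ℝ) ^ 2 ≤ (α : ℝ) ^ 2 - 1 / 4 := by nlinarith
  have hb2 : 3 / 4 * (β : ℝ) ^ 2 ≤ (β : ℝ) ^ 2 - 1 / 4 := by nlinarith
  have hsa : √((α : ℝ) ^ 2 - 1 / 4) ^ 2 = (α : ℝ) ^ 2 - 1 / 4 :=
    Real.sq_sqrt (by nlinarith)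
  have hsb : √((β : ℝ) ^ 2 - 1 / 4) ^ 2 = (β : ℝ) ^ 2 - 1 / 4 :=
    Real.sq_sqrt (by nlinarith)
  have hα0 : (0 : ℝ) < α := by linarith
  have hp : 0 < p := pos_of_mul_pos_left (by linarith : 0 < p * α) hα0.le
  have haα : √((α : ℝ) ^ 2 - 1 / 4) ≤ α := Real.sqrt_le_iff.2 ⟨by linarith, by linarith⟩
  have hbβ : √((β : ℝ) ^ 2 - 1 / 4) ≤ β := Real.sqrt_le_iff.2 ⟨by linarith, by linarith⟩
  have ha0 := Real.sqrt_nonneg ((α : ℝ) ^ 2 - 1 / 4)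
  have hb0 := Real.sqrt_nonneg ((β : ℝ) ^ 2 - 1 / 4)
  refine ⟨hα', hβ', by linarith, hm, by linarith, haα, Real.le_sqrt_of_sq_le (by nlinarith),
    by rw [hsa]; exact ha2, hbβ, Real.le_sqrt_of_sq_le (by nlinarith), ?_, ?_⟩
  · have h1 : √((α : ℝ) ^ 2 - 1 / 4) * √((β : ℝ) ^ 2 - 1 / 4) ≤ α * β := by gcongr
    nlinarith [mul_nonneg hn hα0.le, mul_nonneg hn hn, mul_nonneg hn (by linarith : (0 : ℝ) ≤ β)]
  · have h1 : ((n : ℝ) + 1) * (n + 1) ≤ (n + 1) * (p * α) := by gcongr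
    have h2 : (1 : ℝ) * β * 1 ≤ α * β * (n + 1) := by
      gcongr
      linarith
    have h3 : (1 : ℝ) * β * (n + 1) ≤ α * β * (n + 1) := by gcongr
    have h4 : (1 : ℝ) * α ≤ (n + 1) * α := by gcongr; linarith
    have h5 : (α : ℝ) * β * 1 ≤ α * β * (n + 1) := by gcongr; linarith
    have h6 : (1 : ℝ) * 1 ≤ (n + 1) * α := by gcongr; linarith
    nlinarith

/-- The pointwise bound near the left end point. -/
lemma abs_jacobiWave_le_of_tan_le {α β n : ℕ} {p : ℝ} (hα : 1 ≤ α) (hβ : 1 ≤ β)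
    (hm : (n : ℝ) + 1 ≤ p * α) {w : ℝ} (hw : w ∈ Ioo 0 (π / 2))
    (hle : α * (n + 1) * tan w ^ 2 ≤ 32 * (β : ℝ) ^ 3) :
    |jacobiWave α β n w| ≤ (32 * (β : ℝ) ^ 3) ^ (β / 2 + 1 / 4 : ℝ) *
      (((1 + β) ^ β : ℝ) * exp ((1 + p) * (1 + β) * (32 * (β : ℝ) ^ 3))) *
      ((n + 1) ^ β / (α * (n + 1) : ℝ) ^ (β / 2 + 1 / 4 : ℝ)) := by
  have ht := tan_pos_of_mem hw
  have hα' : (1 : ℝ) ≤ α := by exact_mod_cast hα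
  have hβ' : (1 : ℝ) ≤ β := by exact_mod_cast hβ
  have hn : (0 : ℝ) ≤ n := n.cast_nonneg
  have hα0 : (0 : ℝ) < α := by linarith
  have hp : 0 < p := pos_of_mul_pos_left (by linarith : 0 < p * α) hα0.le
  have hnβ : (n : ℝ) + β ≤ (1 + β) * (n + 1) := by nlinarith
  have hnα : (n : ℝ) + α ≤ (1 + p) * α := by nlinarith
  have hpow : tan w ^ (β + 1 / 2 : ℝ) ≤
      (32 * (β : ℝ) ^ 3) ^ (β / 2 + 1 / 4 : ℝ) / (α * (n + 1) : ℝ) ^ (β / 2 + 1 / 4 : ℝ) := by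
    rw [← div_rpow (by positivity) (by positivity)]
    calc tan w ^ (β + 1 / 2 : ℝ) = (tan w ^ 2) ^ (β / 2 + 1 / 4 : ℝ) := by
          rw [← rpow_natCast (tan w) 2, ← rpow_mul ht.le]
          congr 1
          push_cast
          ring
      _ ≤ _ := by
          refine rpow_le_rpow (by positivity) ?_ (by positivity)
          rw [le_div_iff₀ (by positivity)]
          linarith
  have hexp : ((n : ℝ) + α) * (n + β) * tan w ^ 2 ≤ (1 + p) * (1 + β) * (32 * (β : ℝ) ^ 3) := by
    calc ((n : ℝ) + α) * (n + β) * tan w ^ 2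
        ≤ (1 + p) * α * ((1 + β) * (n + 1)) * tan w ^ 2 := by gcongr
      _ = (1 + p) * (1 + β) * (α * (n + 1) * tan w ^ 2) := by ring
      _ ≤ _ := by gcongr
  calc |jacobiWave α β n w| ≤ _ := abs_jacobiWave_le α β n hw
    _ ≤ (32 * (β : ℝ) ^ 3) ^ (β / 2 + 1 / 4 : ℝ) / (α * (n + 1) : ℝ) ^ (β / 2 + 1 / 4 : ℝ) *
        (((1 + β) * (n + 1)) ^ β * exp ((1 + p) * (1 + β) * (32 * (β : ℝ) ^ 3))) := by gcongr
    _ = _ := by rw [mul_pow]; ring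

lemma rpow_mul_sq_eq {α m β : ℝ} (hα : 0 < α) (hm : 0 < m) :
    m ^ (1 / 3 : ℝ) * (m ^ β / (α * m) ^ (β / 2 + 1 / 4)) ^ 2 =
      (m ^ (-(1 / 3) : ℝ) * (m / α) ^ (β / 2 + 1 / 4)) ^ 2 := by
  rw [mul_rpow hα.le hm.le, div_rpow hm.le hα.le]
  have h1 : (m ^ (1 / 3 : ℝ)) ^ 3 = m := by
    rw [← rpow_natCast, ← rpow_mul hm.le]; norm_num
  have h2 : (m ^ (β / 2 + 1 / 4)) ^ 4 = (m ^ β) ^ 2 * m := by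
    rw [← rpow_natCast, ← rpow_mul hm.le, ← rpow_natCast, ← rpow_mul hm.le,
      ← rpow_add_one hm.ne']
    congr 1
    push_cast
    ring
  have h3 : 0 < m ^ (1 / 3 : ℝ) := by positivity
  have h4 : 0 < m ^ (β / 2 + 1 / 4) := by positivity
  have h5 : 0 < α ^ (β / 2 + 1 / 4) := by positivity
  rw [rpow_neg hm.le]
  generalize m ^ (1 / 3 : ℝ) = x at *
  generalize m ^ (β / 2 + 1 / 4) = y at *
  generalize α ^ (β / 2 + 1 / 4) = z at *
  generalize m ^ β = q at *
  field_simp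
  rw [h1, h2]
  ring

lemma exists_abs_jacobiWave_le (β : ℕ) (hβ : 0 < β) (c : ℝ) (hc : 0 < c) :
    ∃ C : ℝ, 0 < C ∧ ∀ α n : ℕ, c * (1 + (n : ℝ)) ≤ (α : ℝ) → ∀ w ∈ Ioo 0 (π / 2),
      |jacobiWave α β n w| ≤ C * ((n : ℝ) + 1) ^ (-(1 / 3) : ℝ) *
        (((n : ℝ) + 1) / ((α : ℝ) + 1)) ^ ((β : ℝ) / 2 + 1 / 4) := by
  set A := PotBounds.airyConst β (1 / c) (4 * (1 / c) + 6 * β + 5) * PotBounds.soninConst β with hA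
  set D := (32 * (β : ℝ) ^ 3) ^ (β / 2 + 1 / 4 : ℝ) *
    (((1 + β) ^ β : ℝ) * exp ((1 + 1 / c) * (1 + β) * (32 * (β : ℝ) ^ 3))) with hD
  have hβ0 : (0 : ℝ) < β := by exact_mod_cast hβ
  have hD0 : 0 < D := by positivity
  refine ⟨(√A + 1) * D * 2 ^ (β / 2 + 1 / 4 : ℝ), by positivity, fun α n hαn w hw => ?_⟩
  have hm0 : (0 : ℝ) < n + 1 := by positivity
  have hα0 : (0 : ℝ) < α := lt_of_lt_of_le (by positivity) hαn
  have hα : 1 ≤ α := by exact_mod_cast hα0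
  have hα1 : (1 : ℝ) ≤ α := by exact_mod_cast hα
  have hm : (n : ℝ) + 1 ≤ 1 / c * α := by
    rw [one_div, inv_mul_eq_div, le_div_iff₀ hc]; linarith
  have H := potBounds_jacobi hα hβ hm
  have hsa : √((α : ℝ) ^ 2 - 1 / 4) ^ 2 = (α : ℝ) ^ 2 - 1 / 4 := Real.sq_sqrt (by nlinarith)
  have hsb : √((β : ℝ) ^ 2 - 1 / 4) ^ 2 = (β : ℝ) ^ 2 - 1 / 4 :=
    Real.sq_sqrt (by nlinarith [H.one_le_β])
  have hu2 := H.sq_le (h := ((n : ℝ) + 1) ^ (1 / 3 : ℝ))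
    (one_le_rpow H.one_le_m (by norm_num))
    (by rw [← rpow_natCast, ← rpow_mul hm0.le]; norm_num)
    (continuous_jacobiWave hα0 hβ0 n) (jacobiWave_pi_div_two hα0 β n)
    (fun w hw => hasDerivAt_jacobiWave α β n hw)
    (fun w hw => by rw [hsa, hsb]; exact hasDerivAt_jacobiWaveDeriv α β n hw)
    (fun w hw hle => abs_jacobiWave_le_of_tan_le hα hβ hm hw hle) hw
  rw [← hA, ← hD, mul_pow, mul_left_comm _ (D ^ 2), ← rpow_natCast _ β,
    rpow_mul_sq_eq hα0 hm0, ← mul_pow] at hu2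
  have hu := Real.abs_le_sqrt hu2
  rw [Real.sqrt_mul' _ (sq_nonneg _), Real.sqrt_sq (by positivity)] at hu
  have hratio : (((n : ℝ) + 1) / α) ^ (β / 2 + 1 / 4 : ℝ) ≤
      2 ^ (β / 2 + 1 / 4 : ℝ) * (((n : ℝ) + 1) / (α + 1)) ^ (β / 2 + 1 / 4 : ℝ) := by
    rw [← mul_rpow (by norm_num) (by positivity)]
    refine rpow_le_rpow (by positivity) ?_ (by positivity)
    rw [← mul_div_assoc, div_le_div_iff₀ hα0 (by positivity)]
    nlinarith
  refine hu.trans ?_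
  calc √A * (D * (((n : ℝ) + 1) ^ (-(1 / 3) : ℝ) *
        (((n : ℝ) + 1) / α) ^ (β / 2 + 1 / 4 : ℝ)))
      ≤ (√A + 1) * (D * (((n : ℝ) + 1) ^ (-(1 / 3) : ℝ) * (2 ^ (β / 2 + 1 / 4 : ℝ) *
        (((n : ℝ) + 1) / (α + 1)) ^ (β / 2 + 1 / 4 : ℝ)))) := by
        gcongr
        linarith
    _ = _ := by ring

lemma weighted_jacobi_eq_zero_or (α β n : ℕ) {x : ℝ} (hx : x ∈ Icc (-1 : ℝ) 1) :
    ((1 - x) / 2) ^ ((α : ℝ) / 2 + 1 / 4) * ((1 + x) / 2) ^ ((β : ℝ) / 2 + 1 / 4) *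
        |jacobi (α : ℝ) (β : ℝ) n x| = 0 ∨
      ∃ w ∈ Ioo 0 (π / 2), ((1 - x) / 2) ^ ((α : ℝ) / 2 + 1 / 4) *
        ((1 + x) / 2) ^ ((β : ℝ) / 2 + 1 / 4) * |jacobi (α : ℝ) (β : ℝ) n x| =
          |jacobiWave α β n w| := by
  rcases hx.1.eq_or_lt with rfl | h1
  · left
    have : (β : ℝ) / 2 + 1 / 4 ≠ 0 := by positivity
    rw [show (1 + -1 : ℝ) / 2 = 0 by norm_num, zero_rpow this, mul_zero, zero_mul]
  rcases hx.2.eq_or_lt with rfl | h2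
  · left
    have : (α : ℝ) / 2 + 1 / 4 ≠ 0 := by positivity
    rw [show (1 - 1 : ℝ) / 2 = 0 by norm_num, zero_rpow this, zero_mul, zero_mul]
  right
  have hs0 : 0 < √((1 + x) / 2) := Real.sqrt_pos.2 (by linarith)
  have hs1 : √((1 + x) / 2) < 1 := by
    rw [Real.sqrt_lt' one_pos]; linarith
  have hw : arcsin √((1 + x) / 2) ∈ Ioo 0 (π / 2) :=
    ⟨arcsin_pos.2 hs0, arcsin_lt_pi_div_two.2 hs1⟩
  have hsin : sin (arcsin √((1 + x) / 2)) ^ 2 = (1 + x) / 2 := by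
    rw [sin_arcsin (by linarith) hs1.le, Real.sq_sqrt (by linarith)]
  have hcos : cos (arcsin √((1 + x) / 2)) ^ 2 = (1 - x) / 2 := by
    rw [cos_sq', hsin]; ring
  refine ⟨_, hw, ?_⟩
  rw [jacobiWave_eq α β n hw, hsin, hcos, abs_mul, abs_of_nonneg (mul_nonneg
    (rpow_nonneg (by linarith) _) (rpow_nonneg (by linarith) _)),
    show 2 * ((1 + x) / 2) - 1 = x by ring]

end

theorem stmt8 (β : ℕ) (hβ : 0 < β) (c : ℝ) (hc : 0 < c) :
    ∃ C : ℝ, 0 < C ∧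
      ∀ x ∈ Set.Icc (-1 : ℝ) 1, ∀ α n : ℕ, c * (1 + (n : ℝ)) ≤ (α : ℝ) →
        ((1 - x) / 2) ^ ((α : ℝ) / 2 + 1 / 4) * ((1 + x) / 2) ^ ((β : ℝ) / 2 + 1 / 4) *
            |jacobi (α : ℝ) (β : ℝ) n x|
          ≤ C * ((n : ℝ) + 1) ^ (-(1 / 3) : ℝ) *
              (((n : ℝ) + 1) / ((α : ℝ) + 1)) ^ ((β : ℝ) / 2 + 1 / 4) := by
  obtain ⟨C, hC, h⟩ := exists_abs_jacobiWave_le β hβ c hc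
  refine ⟨C, hC, fun x hx α n hαn => ?_⟩
  rcases weighted_jacobi_eq_zero_or α β n hx with h0 | ⟨w, hw, h1⟩
  · rw [h0]
    positivity
  · rw [h1]
    exact h α n hαn w hw
end

section
/- Let (X, μ) be a σ-finite measure space, let w : X → (0,∞) be measurable, let N > 1 be real, and let A ≥ 1 and C > 0 be constants. Let T be a bounded linear operator on L²(μ) with operator norm at most A, and suppose that for every f ∈ L²(μ) with ∫ |f|² w dμ < ∞ and ∫ |f|² w^N dμ < ∞ the following two inequalities hold: (i) ∫ |Tf|² dμ ≤ C ∫ |f|² w dμ; (ii) ∫ |Tf|² w^N dμ ≤ A ( C^{1−N} ∫ |f|² w dμ + ∫ |f|² w^N dμ ). Then there exists a constant K, depending only on N and A, such that ∫ |Tf|² w dμ ≤ K ∫ |f|² w dμ for every f ∈ L²(μ) with ∫ |f|² w dμ < ∞ and ∫ |f|² w^N dμ < ∞. -/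
open MeasureTheory ENNReal

lemma lintegral_enorm_sq_clm_apply_le {X : Type*} [MeasurableSpace X] {μ : Measure X}
    (T : Lp ℂ 2 μ →L[ℂ] Lp ℂ 2 μ) {A : ℝ} (hT : ‖T‖ ≤ A) (f : Lp ℂ 2 μ) :
    ∫⁻ x, ‖T f x‖ₑ ^ 2 ∂μ ≤ ENNReal.ofReal (A ^ 2) * ∫⁻ x, ‖f x‖ₑ ^ 2 ∂μ := by
  have key (g : Lp ℂ 2 μ) : ∫⁻ x, ‖g x‖ₑ ^ 2 ∂μ = ‖g‖ₑ ^ 2 := by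
    have h := eLpNorm_nnreal_pow_eq_lintegral (μ := μ) (f := g) (p := 2) two_ne_zero
    rw [Lp.enorm_def]
    simpa using h.symm
  have hA : 0 ≤ A := (norm_nonneg T).trans hT
  rw [key, key, ofReal_pow hA, ← mul_pow]
  gcongr
  refine (T.le_opENorm f).trans ?_
  gcongr
  rw [← ofReal_norm]
  exact ofReal_le_ofReal hT

/-- Layer cake formula for a weighted integral. -/
lemma lintegral_mul_ofReal_eq_lintegral_setLIntegral {X : Type*} [MeasurableSpace X]
    {μ : Measure X} [SFinite μ] {a : X → ℝ≥0∞} (ha : Measurable a) {w : X → ℝ}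
    (hw : Measurable w) :
    ∫⁻ x, a x * ENNReal.ofReal (w x) ∂μ
      = ∫⁻ t in Set.Ioi (0 : ℝ), ∫⁻ x in {x | t ≤ w x}, a x ∂μ := by
  have hpt (x : X) : a x * ENNReal.ofReal (w x)
      = ∫⁻ t in Set.Ioi (0 : ℝ), {x | t ≤ w x}.indicator a x := by
    have : ∀ t : ℝ, {x | t ≤ w x}.indicator a x
        = (Set.Iic (w x)).indicator (fun _ => a x) t := fun t => by
      simp [Set.indicator]
    simp_rw [this]
    rw [lintegral_indicator measurableSet_Iic, setLIntegral_const,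
      Measure.restrict_apply measurableSet_Iic, Set.inter_comm, Set.Ioi_inter_Iic,
      Real.volume_Ioc, sub_zero]
  simp_rw [hpt]
  rw [lintegral_lintegral_swap]
  · refine lintegral_congr fun t => ?_
    rw [lintegral_indicator (measurableSet_le measurable_const hw)]
  · refine Measurable.aemeasurable ?_
    exact (ha.comp measurable_fst).indicator
      (measurableSet_le measurable_snd (hw.comp measurable_fst))

lemma lintegral_Ioi_ofReal_rpow_neg {N c : ℝ} (hN : 1 < N) (hc : 0 < c) :
    ∫⁻ t in Set.Ioi c, ENNReal.ofReal (t ^ (-N)) = ENNReal.ofReal (c ^ (1 - N) / (N - 1)) := by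
  rw [← ofReal_integral_eq_lintegral_ofReal (integrableOn_Ioi_rpow_of_lt (by linarith) hc),
    integral_Ioi_rpow_of_lt (by linarith) hc]
  · congr 1
    rw [show -N + 1 = 1 - N by ring, neg_div, ← div_neg, neg_sub]
  · filter_upwards [ae_restrict_mem measurableSet_Ioi] with t ht
    exact Real.rpow_nonneg (hc.trans ht).le _

/-- Hardy-type identity for truncations of a power weight below its level sets. -/
lemma lintegral_rpow_neg_mul_setLIntegral_lt {X : Type*} [MeasurableSpace X]
    {μ : Measure X} [SFinite μ] {a : X → ℝ≥0∞} (ha : Measurable a) {w : X → ℝ}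
    (hw : Measurable w) (hw0 : ∀ x, 0 < w x) {N : ℝ} (hN : 1 < N) :
    ∫⁻ t in Set.Ioi (0 : ℝ), ENNReal.ofReal (t ^ (-N)) *
        ∫⁻ x in {x | w x < t}, a x * ENNReal.ofReal (w x ^ N) ∂μ
      = ENNReal.ofReal (1 / (N - 1)) * ∫⁻ x, a x * ENNReal.ofReal (w x) ∂μ := by
  set b : X → ℝ≥0∞ := fun x => a x * ENNReal.ofReal (w x ^ N) with hb
  have hbm : Measurable b := ha.mul (hw.pow_const N).ennreal_ofReal
  have hpt (x : X) : ENNReal.ofReal (1 / (N - 1)) * (a x * ENNReal.ofReal (w x))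
      = ∫⁻ t in Set.Ioi (0 : ℝ),
          ENNReal.ofReal (t ^ (-N)) * {x | w x < t}.indicator b x := by
    have : ∀ t : ℝ, ENNReal.ofReal (t ^ (-N)) * {x | w x < t}.indicator b x
        = (Set.Ioi (w x)).indicator (fun t => ENNReal.ofReal (t ^ (-N)) * b x) t := fun t => by
      simp [Set.indicator]
    simp_rw [this]
    rw [lintegral_indicator measurableSet_Ioi, Measure.restrict_restrict measurableSet_Ioi,
      Set.Ioi_inter_Ioi, sup_eq_left.2 (hw0 x).le, lintegral_mul_const _ (by fun_prop),
      lintegral_Ioi_ofReal_rpow_neg hN (hw0 x), hb]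
    have hN' : 0 < N - 1 := by linarith
    have hid : w x ^ (1 - N) / (N - 1) * w x ^ N = 1 / (N - 1) * w x := by
      rw [div_mul_eq_mul_div, ← Real.rpow_add (hw0 x)]
      simp [div_eq_inv_mul]
    have hofReal := congrArg ENNReal.ofReal hid
    rw [ofReal_mul (div_nonneg (Real.rpow_nonneg (hw0 x).le _) hN'.le),
      ofReal_mul (by positivity)] at hofReal
    rw [mul_left_comm, ← hofReal]
    ring
  rw [← lintegral_const_mul' _ _ ofReal_ne_top]
  simp_rw [hpt]
  rw [lintegral_lintegral_swap]
  · refine lintegral_congr fun t => ?_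
    rw [lintegral_const_mul _ (hbm.indicator (measurableSet_lt hw measurable_const)),
      lintegral_indicator (measurableSet_lt hw measurable_const)]
  · refine Measurable.aemeasurable ?_
    refine Measurable.mul (by fun_prop) ?_
    exact (hbm.comp measurable_fst).indicator
      (measurableSet_lt (hw.comp measurable_fst) measurable_snd)

/-- An `L²` function splits into its parts on a measurable set and on the complement. -/
lemma exists_add_eq_lintegral_restrict {X : Type*} [MeasurableSpace X] {μ : Measure X}
    (f : Lp ℂ 2 μ) {s : Set X} (hs : MeasurableSet s) :
    ∃ g h : Lp ℂ 2 μ, f = g + h ∧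
      (∀ v : X → ℝ≥0∞, ∫⁻ x, ‖g x‖ₑ ^ 2 * v x ∂μ = ∫⁻ x in s, ‖f x‖ₑ ^ 2 * v x ∂μ) ∧
      (∀ v : X → ℝ≥0∞, ∫⁻ x, ‖h x‖ₑ ^ 2 * v x ∂μ = ∫⁻ x in sᶜ, ‖f x‖ₑ ^ 2 * v x ∂μ) := by
  have key {s : Set X} (hs : MeasurableSet s) (v : X → ℝ≥0∞) :
      ∫⁻ x, ‖((Lp.memLp f).indicator hs).toLp _ x‖ₑ ^ 2 * v x ∂μ
        = ∫⁻ x in s, ‖f x‖ₑ ^ 2 * v x ∂μ := by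
    rw [← lintegral_indicator hs]
    refine lintegral_congr_ae ?_
    filter_upwards [((Lp.memLp f).indicator hs).coeFn_toLp] with x hx
    rw [hx]
    by_cases h : x ∈ s <;> simp [h]
  refine ⟨_, _, ?_, key hs, key hs.compl⟩
  rw [← MemLp.toLp_add]
  refine Lp.ext ?_
  refine Filter.EventuallyEq.trans ?_ (MemLp.coeFn_toLp _).symm
  rw [Set.indicator_self_add_compl]

/-- Bound for the mass of `T f` above a level `t` of the weight. -/
lemma setLIntegral_enorm_sq_clm_apply_le {X : Type*} [MeasurableSpace X] {μ : Measure X}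
    {w : X → ℝ} (hw : Measurable w) {N A : ℝ} (hN : 0 ≤ N)
    (T : Lp ℂ 2 μ →L[ℂ] Lp ℂ 2 μ) (hT : ‖T‖ ≤ A) {D : ℝ≥0∞}
    (hTN : ∀ f : Lp ℂ 2 μ,
      ∫⁻ x, ‖f x‖ₑ ^ 2 * ENNReal.ofReal (w x) ∂μ < ⊤ →
      ∫⁻ x, ‖f x‖ₑ ^ 2 * ENNReal.ofReal (w x ^ N) ∂μ < ⊤ →
      ∫⁻ x, ‖T f x‖ₑ ^ 2 * ENNReal.ofReal (w x ^ N) ∂μ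
        ≤ ENNReal.ofReal A * (D * ∫⁻ x, ‖f x‖ₑ ^ 2 * ENNReal.ofReal (w x) ∂μ
          + ∫⁻ x, ‖f x‖ₑ ^ 2 * ENNReal.ofReal (w x ^ N) ∂μ))
    (f : Lp ℂ 2 μ) (hf : ∫⁻ x, ‖f x‖ₑ ^ 2 * ENNReal.ofReal (w x) ∂μ < ⊤)
    (hfN : ∫⁻ x, ‖f x‖ₑ ^ 2 * ENNReal.ofReal (w x ^ N) ∂μ < ⊤) {t : ℝ} (ht : 0 < t) :
    ∫⁻ x in {x | t ≤ w x}, ‖T f x‖ₑ ^ 2 ∂μ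
      ≤ 2 * ENNReal.ofReal (A ^ 2) * ∫⁻ x in {x | t ≤ w x}, ‖f x‖ₑ ^ 2 ∂μ
        + (2 * ENNReal.ofReal A * (D * ∫⁻ x, ‖f x‖ₑ ^ 2 * ENNReal.ofReal (w x) ∂μ)
            * ENNReal.ofReal (t ^ (-N))
          + 2 * ENNReal.ofReal A * (ENNReal.ofReal (t ^ (-N)) *
            ∫⁻ x in {x | w x < t}, ‖f x‖ₑ ^ 2 * ENNReal.ofReal (w x ^ N) ∂μ)) := by
  have hs : MeasurableSet {x | t ≤ w x} := measurableSet_le measurable_const hw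
  obtain ⟨h, g, hfgh, hh, hg⟩ := exists_add_eq_lintegral_restrict f hs
  have hcompl : {x | t ≤ w x}ᶜ = {x | w x < t} := by ext; simp
  rw [hcompl] at hg
  have hTh : ∫⁻ x, ‖T h x‖ₑ ^ 2 ∂μ
      ≤ ENNReal.ofReal (A ^ 2) * ∫⁻ x in {x | t ≤ w x}, ‖f x‖ₑ ^ 2 ∂μ := by
    simpa using (lintegral_enorm_sq_clm_apply_le T hT h).trans_eq
      (congrArg _ (by simpa using hh 1))
  have hg1 : ∫⁻ x, ‖g x‖ₑ ^ 2 * ENNReal.ofReal (w x) ∂μ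
      ≤ ∫⁻ x, ‖f x‖ₑ ^ 2 * ENNReal.ofReal (w x) ∂μ :=
    (hg _).trans_le (setLIntegral_le_lintegral _ _)
  have hgN : ∫⁻ x, ‖g x‖ₑ ^ 2 * ENNReal.ofReal (w x ^ N) ∂μ
      ≤ ∫⁻ x, ‖f x‖ₑ ^ 2 * ENNReal.ofReal (w x ^ N) ∂μ :=
    (hg _).trans_le (setLIntegral_le_lintegral _ _)
  have hTg : ∫⁻ x, ‖T g x‖ₑ ^ 2 * ENNReal.ofReal (w x ^ N) ∂μ
      ≤ ENNReal.ofReal A * (D * ∫⁻ x, ‖f x‖ₑ ^ 2 * ENNReal.ofReal (w x) ∂μ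
        + ∫⁻ x in {x | w x < t}, ‖f x‖ₑ ^ 2 * ENNReal.ofReal (w x ^ N) ∂μ) := by
    refine (hTN g (hg1.trans_lt hf) (hgN.trans_lt hfN)).trans ?_
    rw [hg fun x => ENNReal.ofReal (w x ^ N)]
    gcongr
  have hTg' : ∫⁻ x in {x | t ≤ w x}, ‖T g x‖ₑ ^ 2 ∂μ
      ≤ ENNReal.ofReal (t ^ (-N)) * ∫⁻ x, ‖T g x‖ₑ ^ 2 * ENNReal.ofReal (w x ^ N) ∂μ := by
    rw [← lintegral_const_mul' _ _ ofReal_ne_top]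
    refine (setLIntegral_mono' hs fun x hx => ?_).trans (setLIntegral_le_lintegral _ _)
    have hone : 1 ≤ ENNReal.ofReal (t ^ (-N)) * ENNReal.ofReal (w x ^ N) := by
      rw [← ofReal_mul (Real.rpow_nonneg ht.le _), one_le_ofReal]
      calc 1 = t ^ (-N) * t ^ N := by rw [← Real.rpow_add ht]; simp
        _ ≤ t ^ (-N) * w x ^ N := by
          gcongr
          exact hx
    calc ‖T g x‖ₑ ^ 2 = ‖T g x‖ₑ ^ 2 * 1 := (mul_one _).symm
      _ ≤ ‖T g x‖ₑ ^ 2 * (ENNReal.ofReal (t ^ (-N)) * ENNReal.ofReal (w x ^ N)) := by gcongr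
      _ = _ := by ring
  have hadd : ∀ᵐ x ∂μ, ‖T f x‖ₑ ^ 2 ≤ 2 * ‖T h x‖ₑ ^ 2 + 2 * ‖T g x‖ₑ ^ 2 := by
    have hTf : T f = T h + T g := by rw [← map_add, ← hfgh]
    rw [hTf]
    filter_upwards [Lp.coeFn_add (T h) (T g)] with x hx
    rw [hx, Pi.add_apply]
    calc ‖T h x + T g x‖ₑ ^ 2 ≤ (‖T h x‖ₑ + ‖T g x‖ₑ) ^ 2 := by
          gcongr
          exact enorm_add_le _ _
      _ ≤ 2 * (‖T h x‖ₑ ^ 2 + ‖T g x‖ₑ ^ 2) := by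
          simp only [enorm_eq_nnnorm]
          exact_mod_cast add_sq_le (a := ‖T h x‖₊) (b := ‖T g x‖₊)
      _ = _ := mul_add _ _ _
  have hm (k : Lp ℂ 2 μ) : Measurable fun x => ‖k x‖ₑ ^ 2 :=
    (Lp.stronglyMeasurable k).measurable.enorm.pow_const 2
  calc ∫⁻ x in {x | t ≤ w x}, ‖T f x‖ₑ ^ 2 ∂μ
      ≤ ∫⁻ x in {x | t ≤ w x}, (2 * ‖T h x‖ₑ ^ 2 + 2 * ‖T g x‖ₑ ^ 2) ∂μ :=
        lintegral_mono_ae (ae_restrict_of_ae hadd)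
    _ = 2 * ∫⁻ x in {x | t ≤ w x}, ‖T h x‖ₑ ^ 2 ∂μ
        + 2 * ∫⁻ x in {x | t ≤ w x}, ‖T g x‖ₑ ^ 2 ∂μ := by
        rw [lintegral_add_left ((hm _).const_mul 2), lintegral_const_mul _ (hm _),
          lintegral_const_mul _ (hm _)]
    _ ≤ 2 * (ENNReal.ofReal (A ^ 2) * ∫⁻ x in {x | t ≤ w x}, ‖f x‖ₑ ^ 2 ∂μ)
        + 2 * (ENNReal.ofReal (t ^ (-N)) * (ENNReal.ofReal A *
          (D * ∫⁻ x, ‖f x‖ₑ ^ 2 * ENNReal.ofReal (w x) ∂μ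
        + ∫⁻ x in {x | w x < t}, ‖f x‖ₑ ^ 2 * ENNReal.ofReal (w x ^ N) ∂μ))) := by
        gcongr
        · exact (setLIntegral_le_lintegral _ _).trans hTh
        · exact hTg'.trans (by gcongr)
    _ = _ := by ring

theorem stmt12 (N A : ℝ) (hN : 1 < N) (hA : 1 ≤ A) :
    ∃ K : ℝ, 0 < K ∧
      ∀ (X : Type) [MeasurableSpace X] (μ : Measure X) [SigmaFinite μ]
        (w : X → ℝ), Measurable w → (∀ x, 0 < w x) →
        ∀ (C : ℝ), 0 < C →
        ∀ (T : Lp ℂ 2 μ →L[ℂ] Lp ℂ 2 μ), ‖T‖ ≤ A →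
        (∀ f : Lp ℂ 2 μ,
          (∫⁻ x, (‖f x‖₊ : ℝ≥0∞) ^ 2 * ENNReal.ofReal (w x) ∂μ) < ⊤ →
          (∫⁻ x, (‖f x‖₊ : ℝ≥0∞) ^ 2 * ENNReal.ofReal (w x ^ N) ∂μ) < ⊤ →
          (∫⁻ x, (‖(T f) x‖₊ : ℝ≥0∞) ^ 2 ∂μ)
            ≤ ENNReal.ofReal C * ∫⁻ x, (‖f x‖₊ : ℝ≥0∞) ^ 2 * ENNReal.ofReal (w x) ∂μ) →
        (∀ f : Lp ℂ 2 μ,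
          (∫⁻ x, (‖f x‖₊ : ℝ≥0∞) ^ 2 * ENNReal.ofReal (w x) ∂μ) < ⊤ →
          (∫⁻ x, (‖f x‖₊ : ℝ≥0∞) ^ 2 * ENNReal.ofReal (w x ^ N) ∂μ) < ⊤ →
          (∫⁻ x, (‖(T f) x‖₊ : ℝ≥0∞) ^ 2 * ENNReal.ofReal (w x ^ N) ∂μ)
            ≤ ENNReal.ofReal A *
                (ENNReal.ofReal (C ^ (1 - N)) *
                    (∫⁻ x, (‖f x‖₊ : ℝ≥0∞) ^ 2 * ENNReal.ofReal (w x) ∂μ) +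
                  ∫⁻ x, (‖f x‖₊ : ℝ≥0∞) ^ 2 * ENNReal.ofReal (w x ^ N) ∂μ)) →
        ∀ f : Lp ℂ 2 μ,
          (∫⁻ x, (‖f x‖₊ : ℝ≥0∞) ^ 2 * ENNReal.ofReal (w x) ∂μ) < ⊤ →
          (∫⁻ x, (‖f x‖₊ : ℝ≥0∞) ^ 2 * ENNReal.ofReal (w x ^ N) ∂μ) < ⊤ →
          (∫⁻ x, (‖(T f) x‖₊ : ℝ≥0∞) ^ 2 * ENNReal.ofReal (w x) ∂μ)
            ≤ ENNReal.ofReal K * ∫⁻ x, (‖f x‖₊ : ℝ≥0∞) ^ 2 * ENNReal.ofReal (w x) ∂μ := by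
  have hN' : 0 < N - 1 := by linarith
  have hA0 : 0 ≤ A := by linarith
  refine ⟨1 + (2 * A ^ 2 + (2 * A * (1 / (N - 1)) + 2 * A * (1 / (N - 1)))), by positivity, ?_⟩
  intro X _ μ _ w hw hw0 C hC T hT hT1 hTN f hf hfN
  have ha (k : Lp ℂ 2 μ) : Measurable fun x => ‖k x‖ₑ ^ 2 :=
    (Lp.stronglyMeasurable k).measurable.enorm.pow_const 2
  have hC' : 0 < C⁻¹ := inv_pos.2 hC
  have hlow := hT1 f hf hfN
  simp only [← enorm_eq_nnnorm] at *
  set W := ∫⁻ x, ‖f x‖ₑ ^ 2 * ENNReal.ofReal (w x) ∂μ with hW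
  have hsmall : ∫⁻ t in Set.Ioc 0 C⁻¹, ∫⁻ x in {x | t ≤ w x}, ‖T f x‖ₑ ^ 2 ∂μ ≤ W := by
    calc ∫⁻ t in Set.Ioc 0 C⁻¹, ∫⁻ x in {x | t ≤ w x}, ‖T f x‖ₑ ^ 2 ∂μ
        ≤ ∫⁻ _ in Set.Ioc 0 C⁻¹, ENNReal.ofReal C * W :=
          lintegral_mono fun t => (setLIntegral_le_lintegral _ _).trans hlow
      _ = ENNReal.ofReal (C * C⁻¹) * W := by
          rw [setLIntegral_const, Real.volume_Ioc, sub_zero, ofReal_mul hC.le]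
          ring
      _ = W := by rw [mul_inv_cancel₀ hC.ne', ofReal_one, one_mul]
  have hlarge : ∫⁻ t in Set.Ioi C⁻¹, ∫⁻ x in {x | t ≤ w x}, ‖T f x‖ₑ ^ 2 ∂μ
      ≤ 2 * ENNReal.ofReal (A ^ 2) * W
        + (2 * ENNReal.ofReal A * ENNReal.ofReal (1 / (N - 1)) * W
          + 2 * ENNReal.ofReal A * ENNReal.ofReal (1 / (N - 1)) * W) := by
    have hsub : Set.Ioi C⁻¹ ⊆ Set.Ioi (0 : ℝ) := Set.Ioi_subset_Ioi hC'.le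
    have hmeas : Measurable fun t : ℝ => ∫⁻ x in {x | t ≤ w x}, ‖f x‖ₑ ^ 2 ∂μ := by
      refine Antitone.measurable fun s t hst => lintegral_mono_set fun x hx => ?_
      exact hst.trans hx
    refine (setLIntegral_mono' measurableSet_Ioi fun t ht =>
      setLIntegral_enorm_sq_clm_apply_le hw (by linarith) T hT hTN f hf hfN
        (hC'.trans ht)).trans ?_
    rw [lintegral_add_left (hmeas.const_mul _), lintegral_add_left (by fun_prop),
      lintegral_const_mul _ hmeas, lintegral_const_mul _ (by fun_prop),
      lintegral_const_mul' _ _ (by finiteness), lintegral_Ioi_ofReal_rpow_neg hN hC']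
    have hcancel : ENNReal.ofReal (C ^ (1 - N)) * ENNReal.ofReal (C⁻¹ ^ (1 - N) / (N - 1))
        = ENNReal.ofReal (1 / (N - 1)) := by
      rw [← ofReal_mul (by positivity), Real.inv_rpow hC.le, mul_div_assoc',
        mul_inv_cancel₀ (by positivity)]
    refine add_le_add ?_ (add_le_add ?_ ?_)
    · gcongr
      rw [hW, lintegral_mul_ofReal_eq_lintegral_setLIntegral (ha f) hw]
      exact lintegral_mono_set hsub
    · rw [← hcancel]
      exact le_of_eq (by ring)
    · rw [mul_assoc _ (ENNReal.ofReal (1 / (N - 1))) W]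
      gcongr
      rw [hW, ← lintegral_rpow_neg_mul_setLIntegral_lt (ha f) hw hw0 hN]
      exact lintegral_mono_set hsub
  rw [lintegral_mul_ofReal_eq_lintegral_setLIntegral (ha (T f)) hw,
    ← Set.Ioc_union_Ioi_eq_Ioi hC'.le,
    lintegral_union measurableSet_Ioi (Set.Ioc_disjoint_Ioi le_rfl)]
  refine (add_le_add hsmall hlarge).trans_eq ?_
  rw [ofReal_add (by positivity) (by positivity), ofReal_add (by positivity) (by positivity),
    ofReal_add (by positivity) (by positivity), ofReal_mul (by positivity),
    ofReal_mul (by positivity), ofReal_mul (by positivity)]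
  simp only [ofReal_one, ofReal_ofNat]
  ring
end
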